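/- arXiv:1601.07113 — 4 statements merged into one kernel-verified Lean document; each statement's English description precedes it below -/
import Mathlib

section
/- Let α ≥ 3, β > 0, t₀ > 0, let Φ : H → ℝ be convex, twice continuously differentiable, boundedly inf-compact, and with argmin Φ nonempty, and let x : [t₀, ∞) → H be a solution of (DIN-AVD). Then there exists x* ∈ argmin Φ such that x(t) converges strongly to x* as t → ∞. -/
open Filter MeasureTheory Set
open scoped Topology RealInnerProductSpace

variable {H : Type*} [NormedAddCommGroup H] [InnerProductSpace ℝ H] [CompleteSpace H]

/-- `x`, together with its first and second derivatives `x'`, `x''`, is a twice continuously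
differentiable solution of (DIN-AVD) on `[t₀, ∞)`:
`ẍ(t) + (α/t) ẋ(t) + β ∇²Φ(x(t)) ẋ(t) + ∇Φ(x(t)) = 0`. -/
def IsDINAVDSolution (α β t₀ : ℝ) (Φ : H → ℝ) (x x' x'' : ℝ → H) : Prop :=
  (∀ t ∈ Set.Ici t₀, HasDerivAt x (x' t) t) ∧
  (∀ t ∈ Set.Ici t₀, HasDerivAt x' (x'' t) t) ∧
  ContinuousOn x'' (Set.Ici t₀) ∧
  ∀ t ∈ Set.Ici t₀,
    x'' t + (α / t) • x' t + β • (fderiv ℝ (gradient Φ) (x t)) (x' t)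
      + gradient Φ (x t) = 0

/-!
The curve `y(t) = (α - 1) x(t) + t (ẋ(t) + β ∇Φ(x(t)))` satisfies `ẏ(t) = (β - t) ∇Φ(x(t))`, and
for every minimizer `z` the energy
`t² (Φ(x(t)) - Φ(z)) + t / (2 (t - β)) ‖y(t) - (α - 1) z‖²` is nonincreasing for large `t`, hence
convergent. So `Φ(x(t)) → min Φ`, and `y` is bounded. The energies of two minimizers `z` and `z'`
differ by `t / (2 (t - β))` times an affine function of `⟪y(t), z' - z⟫`, so this inner product
converges.

Eliminating the gradient gives `t ẋ + (α - 1) x = y + t φ ẏ` with `φ = β / (t - β) → 0`, an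
equation in which `ẏ` is harmless: `u = x - φ y` satisfies
`t u̇ + (α - 1) u = (1 - t φ̇ - (α - 1) φ) y`. Hence `x` inherits boundedness from `y`, and
`⟪x(t), z' - z⟫` inherits convergence from `⟪y(t), z' - z⟫`. By compactness `x` has cluster points;
all of them are minimizers, and two of them, `z` and `z'`, must agree because `⟪x(t), z' - z⟫`
converges.
-/

open Asymptotics
open scoped Gradient

section Topology

lemma exists_tendsto_of_antitoneOn_Ici {ι L : Type*} [Preorder ι] [IsDirectedOrder ι]
    [ConditionallyCompleteLinearOrder L] [TopologicalSpace L] [OrderTopology L] {f : ι → L} {T : ι}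
    (hf : AntitoneOn f (Ici T)) (hbdd : BddBelow (f '' Ici T)) :
    ∃ l, Tendsto f atTop (𝓝 l) :=
  ⟨_, tendsto_comp_val_Ici_atTop.1 <| tendsto_atTop_ciInf (antitoneOn_iff_antitone.1 hf) <| by
    rwa [image_eq_range] at hbdd⟩

lemma eq_of_mapClusterPt_of_tendsto {ι X : Type*} [TopologicalSpace X] [T2Space X] {F : Filter ι}
    {u : ι → X} {a b : X} (ha : MapClusterPt a F u) (hb : Tendsto u F (𝓝 b)) : a = b :=
  eq_of_nhds_neBot (ClusterPt.mono ha hb)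

lemma exists_tendsto_of_tendsto_inner_sub {ι E : Type*} [NormedAddCommGroup E]
    [InnerProductSpace ℝ E] {F : Filter ι} [NeBot F] {u : ι → E} {K S : Set E} (hK : IsCompact K)
    (huK : ∀ᶠ i in F, u i ∈ K) (hS : ∀ z, MapClusterPt z F u → z ∈ S)
    (hinner : ∀ z ∈ S, ∀ z' ∈ S, ∃ L, Tendsto (fun i => ⟪u i, z' - z⟫) F (𝓝 L)) :
    ∃ z ∈ S, Tendsto u F (𝓝 z) := by
  obtain ⟨z, -, hz⟩ := hK.exists_mapClusterPt (f := F) (u := u) (le_principal_iff.2 huK)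
  refine ⟨z, hS z hz, hK.tendsto_nhds_of_unique_mapClusterPt huK fun z' _ hz' => ?_⟩
  obtain ⟨L, hL⟩ := hinner z (hS z hz) z' (hS z' hz')
  have inner_eq : ∀ w, MapClusterPt w F u → ⟪w, z' - z⟫ = L := fun w hw =>
    eq_of_mapClusterPt_of_tendsto
      (hw.continuousAt_comp (f := fun v => ⟪v, z' - z⟫) (by fun_prop)) hL
  have inner_self_zero : ⟪z' - z, z' - z⟫ = 0 := by
    rw [inner_sub_left, inner_eq z' hz', inner_eq z hz, sub_self]
  exact sub_eq_zero.1 (inner_self_eq_zero.1 inner_self_zero)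

end Topology

section Gradient

lemma hasFDerivAt_apply_sub_le_of_convexOn {E : Type*} [NormedAddCommGroup E] [NormedSpace ℝ E]
    {f : E → ℝ} {f' : E →L[ℝ] ℝ} {s : Set E} {u z : E} (hf : ConvexOn ℝ s f) (hu : u ∈ s)
    (hz : z ∈ s) (hf' : HasFDerivAt f f' u) : f' (z - u) ≤ f z - f u := by
  let line : ℝ →ᵃ[ℝ] E := AffineMap.lineMap u z
  have hline : HasDerivAt (f ∘ line) (f' (z - u)) 0 :=
    HasFDerivAt.comp_hasDerivAt 0 (by simpa [line] using hf') AffineMap.hasDerivAt_lineMap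
  simpa [slope, line] using (hf.comp_affineMap line).le_slope_of_hasDerivAt
    (by simpa [line] using hu) (by simpa [line] using hz) one_pos hline

lemma hasDerivAt_comp_of_hasGradientAt {f : H → ℝ} {g : H} {γ : ℝ → H} {γ' : H} {t : ℝ}
    (hf : HasGradientAt f g (γ t)) (hγ : HasDerivAt γ γ' t) :
    HasDerivAt (fun s => f (γ s)) ⟪g, γ'⟫ t :=
  hf.hasFDerivAt.comp_hasDerivAt t hγ

lemma differentiable_gradient_of_contDiff_two {f : H → ℝ} (hf : ContDiff ℝ 2 f) :
    Differentiable ℝ (∇ f) :=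
  (InnerProductSpace.toDual ℝ H).symm.toContinuousLinearEquiv.differentiable.comp
    ((hf.fderiv_right (m := 1) (by norm_num)).differentiable one_ne_zero)

end Gradient

section EulerEquation

variable {E : Type*} [NormedAddCommGroup E] [NormedSpace ℝ E] {a : ℝ}

lemma norm_le_of_norm_smul_deriv_add_smul_le {u u' : ℝ → E} {T C t : ℝ} (ha : 0 < a) (hT : 0 < T)
    (hu : ∀ s ≥ T, HasDerivAt u (u' s) s) (hC : ∀ s ≥ T, ‖s • u' s + a • u s‖ ≤ C) (ht : T ≤ t) :
    ‖u t‖ ≤ (T / t) ^ a * ‖u T‖ + C / a := by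
  have rpow_deriv : ∀ s ≥ T, HasDerivAt (fun s : ℝ => s ^ a) (a * s ^ (a - 1)) s := fun s hs =>
    Real.hasDerivAt_rpow_const (Or.inl (hT.trans_le hs).ne')
  have smul_deriv : ∀ s ≥ T,
      HasDerivAt (fun s => s ^ a • u s) (s ^ (a - 1) • (s • u' s + a • u s)) s := by
    intro s hs
    refine ((rpow_deriv s hs).smul (hu s hs)).congr_deriv ?_
    have hsa : s ^ a = s ^ (a - 1) * s := by
      rw [← Real.rpow_add_one (hT.trans_le hs).ne', sub_add_cancel]
    rw [hsa]
    module
  have bound_deriv : ∀ s ≥ T, HasDerivAt (fun s => T ^ a * ‖u T‖ + C / a * (s ^ a - T ^ a))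
      (C * s ^ (a - 1)) s := by
    intro s hs
    refine ((((rpow_deriv s hs).sub_const _).const_mul _).const_add _).congr_deriv ?_
    field_simp
  have norm_smul_le : ‖t ^ a • u t‖ ≤ T ^ a * ‖u T‖ + C / a * (t ^ a - T ^ a) := by
    refine image_norm_le_of_norm_deriv_right_le_deriv_boundary' (a := T) (b := t)
      (fun s hs => (smul_deriv s hs.1).continuousAt.continuousWithinAt)
      (fun s hs => (smul_deriv s hs.1).hasDerivWithinAt) ?_
      (fun s hs => (bound_deriv s hs.1).continuousAt.continuousWithinAt)
      (fun s hs => (bound_deriv s hs.1).hasDerivWithinAt) (fun s hs => ?_) ⟨ht, le_rfl⟩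
    · rw [norm_smul, Real.norm_of_nonneg (by positivity), sub_self, mul_zero, add_zero]
    · have hs0 : 0 < s := hT.trans_le hs.1
      rw [norm_smul, Real.norm_of_nonneg (by positivity), mul_comm]
      gcongr
      exact hC s hs.1
  have ht0 : 0 < t := hT.trans_le ht
  have hC0 : 0 ≤ C := (norm_nonneg _).trans (hC T le_rfl)
  rw [norm_smul, Real.norm_of_nonneg (by positivity)] at norm_smul_le
  have hta : 0 < t ^ a := by positivity
  have drop : 0 ≤ C / a * T ^ a := by positivity
  rw [Real.div_rpow hT.le ht0.le, div_mul_eq_mul_div, ← sub_le_iff_le_add, le_div_iff₀ hta]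
  linarith

lemma isBigO_one_of_smul_deriv_add_smul {u u' : ℝ → E} (ha : 0 < a)
    (hu : ∀ᶠ t in atTop, HasDerivAt u (u' t) t)
    (h : (fun t => t • u' t + a • u t) =O[atTop] fun _ => (1 : ℝ)) :
    u =O[atTop] fun _ => (1 : ℝ) := by
  obtain ⟨C, hC⟩ := h.bound
  simp only [norm_one, mul_one] at hC
  obtain ⟨T, hT⟩ := eventually_atTop.1 ((hu.and hC).and (eventually_gt_atTop 0))
  have hT0 : 0 < T := (hT T le_rfl).2
  refine IsBigO.of_bound (‖u T‖ + C / a) ?_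
  filter_upwards [eventually_ge_atTop T] with t ht
  have ht0 : 0 < t := hT0.trans_le ht
  calc ‖u t‖ ≤ (T / t) ^ a * ‖u T‖ + C / a := norm_le_of_norm_smul_deriv_add_smul_le ha hT0
        (fun s hs => (hT s hs).1.1) (fun s hs => (hT s hs).1.2) ht
    _ ≤ 1 * ‖u T‖ + C / a := by
        gcongr
        exact Real.rpow_le_one (by positivity) ((div_le_one ht0).2 ht) ha.le
    _ = (‖u T‖ + C / a) * ‖(1 : ℝ)‖ := by simp

lemma tendsto_zero_of_smul_deriv_add_smul {u u' : ℝ → E} (ha : 0 < a)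
    (hu : ∀ᶠ t in atTop, HasDerivAt u (u' t) t)
    (h : Tendsto (fun t => t • u' t + a • u t) atTop (𝓝 0)) : Tendsto u atTop (𝓝 0) := by
  refine NormedAddGroup.tendsto_nhds_zero.2 fun ε hε => ?_
  have h_small : ∀ᶠ t in atTop, ‖t • u' t + a • u t‖ < a * (ε / 2) :=
    NormedAddGroup.tendsto_nhds_zero.1 h _ (by positivity)
  obtain ⟨T, hT⟩ := eventually_atTop.1 ((hu.and h_small).and (eventually_gt_atTop 0))
  have transient : Tendsto (fun t => (T / t) ^ a * ‖u T‖) atTop (𝓝 0) := by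
    have hTt : Tendsto (fun t => T / t) atTop (𝓝 0) := tendsto_const_nhds.div_atTop tendsto_id
    simpa [Real.zero_rpow ha.ne'] using (hTt.rpow_const (Or.inr ha.le)).mul_const ‖u T‖
  filter_upwards [eventually_ge_atTop T, transient.eventually_lt_const (half_pos hε)]
    with t ht h_transient
  have hut : ‖u t‖ ≤ (T / t) ^ a * ‖u T‖ + a * (ε / 2) / a :=
    norm_le_of_norm_smul_deriv_add_smul_le ha (hT T le_rfl).2
      (fun s hs => (hT s hs).1.1) (fun s hs => (hT s hs).1.2.le) ht
  rw [mul_div_cancel_left₀ _ ha.ne'] at hut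
  linarith

lemma tendsto_of_smul_deriv_add_smul {u u' : ℝ → E} {l : E} (ha : 0 < a)
    (hu : ∀ᶠ t in atTop, HasDerivAt u (u' t) t)
    (h : Tendsto (fun t => t • u' t + a • u t) atTop (𝓝 l)) :
    Tendsto u atTop (𝓝 (a⁻¹ • l)) := by
  refine tendsto_sub_nhds_zero_iff.1 <|
    tendsto_zero_of_smul_deriv_add_smul (u' := u') ha (hu.mono fun t ht => ht.sub_const _) ?_
  refine (tendsto_sub_nhds_zero_iff.2 h).congr fun t => ?_
  rw [smul_sub, smul_inv_smul₀ ha.ne', add_sub_assoc]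

lemma smul_deriv_add_smul_sub_smul {φ φ' t : ℝ} {x x' y y' : E}
    (hxy : t • x' + a • x = y + (t * φ) • y') :
    t • (x' - (φ • y' + φ' • y)) + a • (x - φ • y) = (1 - (t * φ' + a * φ)) • y := by
  linear_combination (norm := module) hxy

variable {φ φ' : ℝ → ℝ} {x x' y y' : ℝ → E}

lemma isBigO_one_of_smul_deriv_add_smul_eq (ha : 0 < a)
    (hφ : ∀ᶠ t in atTop, HasDerivAt φ (φ' t) t) (hφ_zero : Tendsto φ atTop (𝓝 0))
    (hφ'_zero : Tendsto (fun t => t * φ' t) atTop (𝓝 0))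
    (hx : ∀ᶠ t in atTop, HasDerivAt x (x' t) t) (hy : ∀ᶠ t in atTop, HasDerivAt y (y' t) t)
    (hxy : ∀ᶠ t in atTop, t • x' t + a • x t = y t + (t * φ t) • y' t)
    (hy_bdd : y =O[atTop] fun _ => (1 : ℝ)) : x =O[atTop] fun _ => (1 : ℝ) := by
  have corrected_deriv : ∀ᶠ t in atTop,
      HasDerivAt (fun t => x t - φ t • y t) (x' t - (φ t • y' t + φ' t • y t)) t := by
    filter_upwards [hφ, hx, hy] with t hφt hxt hyt using hxt.sub (hφt.smul hyt)
  have factor_bdd : (fun t => 1 - (t * φ' t + a * φ t)) =O[atTop] fun _ => (1 : ℝ) :=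
    ((hφ'_zero.add (hφ_zero.const_mul a)).const_sub 1).isBigO_one ℝ
  have corrected_bdd : (fun t => x t - φ t • y t) =O[atTop] fun _ => (1 : ℝ) :=
    isBigO_one_of_smul_deriv_add_smul ha corrected_deriv <| (factor_bdd.smul hy_bdd).congr'
      (hxy.mono fun t ht => (smul_deriv_add_smul_sub_smul ht).symm) (by simp)
  have correction_bdd : (fun t => φ t • y t) =O[atTop] fun _ => (1 : ℝ) := by
    simpa using (hφ_zero.isBigO_one ℝ).smul hy_bdd
  simpa using corrected_bdd.add correction_bdd

lemma tendsto_of_smul_deriv_add_smul_eq {l : E} (ha : 0 < a)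
    (hφ : ∀ᶠ t in atTop, HasDerivAt φ (φ' t) t) (hφ_zero : Tendsto φ atTop (𝓝 0))
    (hφ'_zero : Tendsto (fun t => t * φ' t) atTop (𝓝 0))
    (hx : ∀ᶠ t in atTop, HasDerivAt x (x' t) t) (hy : ∀ᶠ t in atTop, HasDerivAt y (y' t) t)
    (hxy : ∀ᶠ t in atTop, t • x' t + a • x t = y t + (t * φ t) • y' t)
    (hyl : Tendsto y atTop (𝓝 l)) : Tendsto x atTop (𝓝 (a⁻¹ • l)) := by
  have corrected_deriv : ∀ᶠ t in atTop,
      HasDerivAt (fun t => x t - φ t • y t) (x' t - (φ t • y' t + φ' t • y t)) t := by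
    filter_upwards [hφ, hx, hy] with t hφt hxt hyt using hxt.sub (hφt.smul hyt)
  have rhs_tendsto : Tendsto (fun t => (1 - (t * φ' t + a * φ t)) • y t) atTop (𝓝 l) := by
    simpa using ((hφ'_zero.add (hφ_zero.const_mul a)).const_sub 1).smul hyl
  have corrected_tendsto : Tendsto (fun t => x t - φ t • y t) atTop (𝓝 (a⁻¹ • l)) :=
    tendsto_of_smul_deriv_add_smul ha corrected_deriv <| rhs_tendsto.congr'
      (hxy.mono fun t ht => (smul_deriv_add_smul_sub_smul ht).symm)
  simpa using corrected_tendsto.add (hφ_zero.smul hyl)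

end EulerEquation

section Correction

variable (β : ℝ)

lemma hasDerivAt_div_sub {t : ℝ} (ht : t ≠ β) :
    HasDerivAt (fun s => β / (s - β)) (-β / (t - β) ^ 2) t := by
  have := ((hasDerivAt_id t).sub_const β).fun_inv (sub_ne_zero.2 ht)
  simpa [div_eq_mul_inv, mul_comm] using this.const_mul β

lemma tendsto_div_sub_atTop : Tendsto (fun t => β / (t - β)) atTop (𝓝 0) :=
  tendsto_const_nhds.div_atTop (tendsto_atTop_add_const_right _ (-β) tendsto_id)

lemma tendsto_mul_deriv_div_sub_atTop :
    Tendsto (fun t => t * (-β / (t - β) ^ 2)) atTop (𝓝 0) := by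
  have hφ := tendsto_div_sub_atTop β
  have : Tendsto (fun t => -(β / (t - β)) - (β / (t - β)) ^ 2) atTop (𝓝 0) := by
    simpa using hφ.neg.sub (hφ.pow 2)
  refine this.congr' ?_
  filter_upwards [eventually_gt_atTop β] with t ht
  have : t - β ≠ 0 := (sub_pos.2 ht).ne'
  field_simp
  ring

end Correction

/-- The curve `y(t) = (α - 1) x(t) + t (ẋ(t) + β ∇Φ(x(t)))`, in whose terms (DIN-AVD) becomes the
first-order equation `ẏ(t) = (β - t) ∇Φ(x(t))`; `x'` stands for the derivative of `x`. -/
noncomputable def extrapolation (α β : ℝ) (Φ : H → ℝ) (x x' : ℝ → H) (t : ℝ) : H :=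
  (α - 1) • x t + t • (x' t + β • ∇ Φ (x t))

/-- The Lyapunov function of (DIN-AVD) attached to a point `z`, nonincreasing for `t > β` when `z`
minimizes `Φ`. -/
noncomputable def energy (α β : ℝ) (Φ : H → ℝ) (x x' : ℝ → H) (z : H) (t : ℝ) : ℝ :=
  t ^ 2 * (Φ (x t) - Φ z) + t / (2 * (t - β)) * ‖extrapolation α β Φ x x' t - (α - 1) • z‖ ^ 2

section Energy

variable {α β t : ℝ} {Φ : H → ℝ} {x x' : ℝ → H} {z z' : H}

lemma sq_mul_sub_le_energy (ht : 0 ≤ t) (hβt : β ≤ t) :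
    t ^ 2 * (Φ (x t) - Φ z) ≤ energy α β Φ x x' z t :=
  le_add_of_nonneg_right <| by have := sub_nonneg.2 hβt; positivity

lemma norm_extrapolation_sub_sq_le_two_mul_energy (hβ : 0 ≤ β) (hβt : β < t)
    (hz : Φ z ≤ Φ (x t)) :
    ‖extrapolation α β Φ x x' t - (α - 1) • z‖ ^ 2 ≤ 2 * energy α β Φ x x' z t := by
  have values_nonneg : 0 ≤ t ^ 2 * (Φ (x t) - Φ z) :=
    mul_nonneg (sq_nonneg t) (sub_nonneg.2 hz)
  have half_le : 1 / 2 ≤ t / (2 * (t - β)) := by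
    rw [div_le_div_iff₀ two_pos (by linarith)]
    linarith
  have := mul_le_mul_of_nonneg_right half_le
    (sq_nonneg ‖extrapolation α β Φ x x' t - (α - 1) • z‖)
  unfold energy
  linarith

lemma energy_nonneg (hβ : 0 ≤ β) (hβt : β < t) (hz : Φ z ≤ Φ (x t)) :
    0 ≤ energy α β Φ x x' z t := by
  have := norm_extrapolation_sub_sq_le_two_mul_energy (α := α) (x' := x') hβ hβt hz
  linarith [sq_nonneg ‖extrapolation α β Φ x x' t - (α - 1) • z‖]

lemma energy_sub_energy (hΦ : Φ z = Φ z') :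
    energy α β Φ x x' z t - energy α β Φ x x' z' t = t / (2 * (t - β)) *
      (2 * (α - 1) * ⟪extrapolation α β Φ x x' t, z' - z⟫
        + (α - 1) ^ 2 * (‖z‖ ^ 2 - ‖z'‖ ^ 2)) := by
  simp only [energy, norm_sub_sq_real, norm_smul, mul_pow, Real.norm_eq_abs, sq_abs,
    inner_smul_right, inner_sub_right, hΦ]
  ring

lemma extrapolation_sub_smul :
    extrapolation α β Φ x x' t - (α - 1) • z
      = (α - 1) • (x t - z) + t • x' t + (t * β) • ∇ Φ (x t) := by
  unfold extrapolation
  module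

lemma smul_deriv_add_smul_eq_extrapolation_add (hβt : t ≠ β) :
    t • x' t + (α - 1) • x t = extrapolation α β Φ x x' t
      + (t * (β / (t - β))) • (β - t) • ∇ Φ (x t) := by
  have : t * (β / (t - β)) * (β - t) = -(t * β) := by
    field_simp [sub_ne_zero.2 hβt]
    ring
  rw [smul_smul, this, extrapolation]
  module

end Energy

namespace IsDINAVDSolution

variable {α β t₀ T t : ℝ} {Φ : H → ℝ} {x x' x'' : ℝ → H} {z z' : H}

lemma hasDerivAt_extrapolation (hsol : IsDINAVDSolution α β t₀ Φ x x' x'')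
    (hΦ' : Differentiable ℝ (∇ Φ)) (ht₀ : t₀ ≤ t) (ht : t ≠ 0) :
    HasDerivAt (extrapolation α β Φ x x') ((β - t) • ∇ Φ (x t)) t := by
  obtain ⟨hx, hx', -, heq⟩ := hsol
  have gradient_deriv : HasDerivAt (fun s => ∇ Φ (x s)) (fderiv ℝ (∇ Φ) (x t) (x' t)) t :=
    (hΦ' (x t)).hasFDerivAt.comp_hasDerivAt t (hx t ht₀)
  refine (((hx t ht₀).const_smul (α - 1)).add ((hasDerivAt_id t).smul
    ((hx' t ht₀).add (gradient_deriv.const_smul β)))).congr_deriv ?_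
  have smul_eq := congrArg (t • ·) (heq t ht₀)
  simp only [smul_add, smul_smul, mul_div_cancel₀ _ ht, smul_zero] at smul_eq
  simp only [id, Pi.add_apply, Pi.smul_apply]
  linear_combination (norm := module) smul_eq

lemma hasDerivAt_energy (hsol : IsDINAVDSolution α β t₀ Φ x x' x'') (hΦ : Differentiable ℝ Φ)
    (hΦ' : Differentiable ℝ (∇ Φ)) (ht₀ : t₀ ≤ t) (ht : t ≠ 0) (hβt : t ≠ β) :
    HasDerivAt (energy α β Φ x x' z)
      (2 * t * (Φ (x t) - Φ z) - (α - 1) * t * ⟪∇ Φ (x t), x t - z⟫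
        - β * t ^ 2 * ‖∇ Φ (x t)‖ ^ 2
        - β / (2 * (t - β) ^ 2) * ‖extrapolation α β Φ x x' t - (α - 1) • z‖ ^ 2) t := by
  have values_deriv : HasDerivAt (fun s => Φ (x s)) ⟪∇ Φ (x t), x' t⟫ t :=
    hasDerivAt_comp_of_hasGradientAt (hΦ (x t)).hasGradientAt (hsol.1 t ht₀)
  have norm_sq_deriv :=
    ((hsol.hasDerivAt_extrapolation hΦ' ht₀ ht).sub_const ((α - 1) • z)).norm_sq
  have hne : t - β ≠ 0 := sub_ne_zero.2 hβt
  have weight_deriv : HasDerivAt (fun s => s / (2 * (s - β))) (-β / (2 * (t - β) ^ 2)) t := by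
    refine ((hasDerivAt_id t).div (((hasDerivAt_id t).sub_const β).const_mul 2)
      (by simpa using hne)).congr_deriv ?_
    simp only [id]
    field_simp
    ring
  refine ((((hasDerivAt_id t).pow 2).mul (values_deriv.sub_const (Φ z))).add
    (weight_deriv.mul norm_sq_deriv)).congr_deriv ?_
  have inner_eq : ⟪extrapolation α β Φ x x' t - (α - 1) • z, ∇ Φ (x t)⟫
      = (α - 1) * ⟪∇ Φ (x t), x t - z⟫ + t * ⟪∇ Φ (x t), x' t⟫
        + t * β * ‖∇ Φ (x t)‖ ^ 2 := by
    rw [real_inner_comm, extrapolation_sub_smul]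
    simp only [inner_add_right, inner_smul_right, real_inner_self_eq_norm_sq]
  simp only [id, Pi.pow_apply]
  rw [inner_smul_right, inner_eq]
  field_simp
  ring

lemma antitoneOn_energy (hsol : IsDINAVDSolution α β t₀ Φ x x' x'') (hα : 3 ≤ α) (hβ : 0 ≤ β)
    (hconv : ConvexOn ℝ univ Φ) (hΦ : Differentiable ℝ Φ) (hΦ' : Differentiable ℝ (∇ Φ))
    (hz : ∀ w, Φ z ≤ Φ w) (ht₀ : t₀ ≤ T) (hβT : β < T) :
    AntitoneOn (energy α β Φ x x' z) (Ici T) := by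
  have energy_deriv := fun t (ht : T ≤ t) =>
    hsol.hasDerivAt_energy (z := z) hΦ hΦ' (ht₀.trans ht) (hβ.trans_lt (hβT.trans_le ht)).ne'
      (hβT.trans_le ht).ne'
  refine antitoneOn_of_hasDerivWithinAt_nonpos (convex_Ici T)
    (fun t ht => (energy_deriv t ht).continuousAt.continuousWithinAt)
    (fun t ht => (energy_deriv t (interior_subset ht)).hasDerivWithinAt) fun t ht => ?_
  have ht0 : 0 < t := hβ.trans_lt (hβT.trans_le (interior_subset ht))
  have values_nonneg : 0 ≤ Φ (x t) - Φ z := sub_nonneg.2 (hz _)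
  have gradient_ineq : Φ (x t) - Φ z ≤ ⟪∇ Φ (x t), x t - z⟫ := by
    have := hasFDerivAt_apply_sub_le_of_convexOn hconv (mem_univ (x t)) (mem_univ z)
      (hΦ (x t)).hasFDerivAt
    rw [← inner_gradient_left, ← neg_sub (x t) z, inner_neg_right] at this
    linarith
  have values_le : 2 * t * (Φ (x t) - Φ z) ≤ (α - 1) * t * ⟪∇ Φ (x t), x t - z⟫ := by
    gcongr
    · nlinarith
    · linarith
  have gradient_term : 0 ≤ β * t ^ 2 * ‖∇ Φ (x t)‖ ^ 2 := by positivity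
  have weight_term : 0 ≤ β / (2 * (t - β) ^ 2)
      * ‖extrapolation α β Φ x x' t - (α - 1) • z‖ ^ 2 := by positivity
  linarith

lemma exists_tendsto_energy (hsol : IsDINAVDSolution α β t₀ Φ x x' x'') (hα : 3 ≤ α) (hβ : 0 ≤ β)
    (hconv : ConvexOn ℝ univ Φ) (hΦ : Differentiable ℝ Φ) (hΦ' : Differentiable ℝ (∇ Φ))
    (hz : ∀ w, Φ z ≤ Φ w) : ∃ l, Tendsto (energy α β Φ x x' z) atTop (𝓝 l) := by
  have hβT : β < max t₀ β + 1 := (le_max_right t₀ β).trans_lt (lt_add_one _)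
  refine exists_tendsto_of_antitoneOn_Ici (T := max t₀ β + 1)
    (hsol.antitoneOn_energy hα hβ hconv hΦ hΦ' hz
      ((le_max_left t₀ β).trans (le_add_of_nonneg_right zero_le_one)) hβT) ⟨0, ?_⟩
  rintro _ ⟨t, ht, rfl⟩
  exact energy_nonneg hβ (hβT.trans_le ht) (hz _)

lemma tendsto_values (hsol : IsDINAVDSolution α β t₀ Φ x x' x'') (hα : 3 ≤ α) (hβ : 0 ≤ β)
    (hconv : ConvexOn ℝ univ Φ) (hΦ : Differentiable ℝ Φ) (hΦ' : Differentiable ℝ (∇ Φ))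
    (hz : ∀ w, Φ z ≤ Φ w) : Tendsto (fun t => Φ (x t)) atTop (𝓝 (Φ z)) := by
  obtain ⟨l, hl⟩ := hsol.exists_tendsto_energy hα hβ hconv hΦ hΦ' hz
  have quotient_tendsto : Tendsto (fun t => energy α β Φ x x' z t / t ^ 2) atTop (𝓝 0) :=
    hl.div_atTop (tendsto_pow_atTop two_ne_zero)
  refine tendsto_sub_nhds_zero_iff.1 <| squeeze_zero' (.of_forall fun t => sub_nonneg.2 (hz _)) ?_
    quotient_tendsto
  filter_upwards [eventually_gt_atTop 0, eventually_ge_atTop β] with t ht hβt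
  rw [le_div_iff₀' (pow_pos ht 2)]
  exact sq_mul_sub_le_energy ht.le hβt

lemma isBigO_one_extrapolation (hsol : IsDINAVDSolution α β t₀ Φ x x' x'') (hα : 3 ≤ α)
    (hβ : 0 ≤ β) (hconv : ConvexOn ℝ univ Φ) (hΦ : Differentiable ℝ Φ)
    (hΦ' : Differentiable ℝ (∇ Φ)) (hz : ∀ w, Φ z ≤ Φ w) :
    extrapolation α β Φ x x' =O[atTop] fun _ => (1 : ℝ) := by
  obtain ⟨l, hl⟩ := hsol.exists_tendsto_energy hα hβ hconv hΦ hΦ' hz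
  have sq_bdd : (fun t => ‖extrapolation α β Φ x x' t - (α - 1) • z‖ ^ 2)
      =O[atTop] fun _ => (1 : ℝ) := by
    refine IsBigO.trans (.of_bound' ?_) ((hl.const_mul 2).isBigO_one ℝ)
    filter_upwards [eventually_gt_atTop β] with t hβt
    rw [Real.norm_of_nonneg (sq_nonneg _)]
    exact (norm_extrapolation_sub_sq_le_two_mul_energy hβ hβt (hz _)).trans (le_abs_self _)
  have sub_bdd : (fun t => extrapolation α β Φ x x' t - (α - 1) • z) =O[atTop]
      fun _ => (1 : ℝ) :=
    isBigO_norm_left.1 <| IsBigO.of_pow two_ne_zero (sq_bdd.congr_right fun _ => by simp)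
  simpa using sub_bdd.add (isBigO_const_const ((α - 1) • z) one_ne_zero atTop)

lemma exists_tendsto_inner_extrapolation (hsol : IsDINAVDSolution α β t₀ Φ x x' x'')
    (hα : 3 ≤ α) (hβ : 0 ≤ β) (hconv : ConvexOn ℝ univ Φ) (hΦ : Differentiable ℝ Φ)
    (hΦ' : Differentiable ℝ (∇ Φ)) (hz : ∀ w, Φ z ≤ Φ w) (hz' : ∀ w, Φ z' ≤ Φ w) :
    ∃ L, Tendsto (fun t => ⟪extrapolation α β Φ x x' t, z' - z⟫) atTop (𝓝 L) := by
  obtain ⟨l, hl⟩ := hsol.exists_tendsto_energy hα hβ hconv hΦ hΦ' hz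
  obtain ⟨l', hl'⟩ := hsol.exists_tendsto_energy hα hβ hconv hΦ hΦ' hz'
  have weight_tendsto : Tendsto (fun t => 2 * (1 - β / t)) atTop (𝓝 2) := by
    simpa using ((tendsto_const_nhds (x := β)).div_atTop tendsto_id).const_sub 1 |>.const_mul 2
  refine ⟨_, ((((hl.sub hl').mul weight_tendsto).sub_const
    ((α - 1) ^ 2 * (‖z‖ ^ 2 - ‖z'‖ ^ 2))).div_const (2 * (α - 1))).congr' ?_⟩
  filter_upwards [eventually_gt_atTop 0, eventually_gt_atTop β] with t ht hβt
  have hα1 : α - 1 ≠ 0 := by linarith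
  have hne : t - β ≠ 0 := (sub_pos.2 hβt).ne'
  rw [energy_sub_energy (le_antisymm (hz _) (hz' _))]
  field_simp
  ring

lemma eventually_hasDerivAt (hsol : IsDINAVDSolution α β t₀ Φ x x' x'') :
    ∀ᶠ t in atTop, HasDerivAt x (x' t) t :=
  (eventually_ge_atTop t₀).mono hsol.1

lemma eventually_hasDerivAt_extrapolation (hsol : IsDINAVDSolution α β t₀ Φ x x' x'')
    (hΦ' : Differentiable ℝ (∇ Φ)) :
    ∀ᶠ t in atTop, HasDerivAt (extrapolation α β Φ x x') ((β - t) • ∇ Φ (x t)) t := by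
  filter_upwards [eventually_ge_atTop t₀, eventually_ne_atTop 0] with t ht₀ ht
    using hsol.hasDerivAt_extrapolation hΦ' ht₀ ht

lemma isBigO_one (hsol : IsDINAVDSolution α β t₀ Φ x x' x'') (hα : 3 ≤ α) (hβ : 0 ≤ β)
    (hconv : ConvexOn ℝ univ Φ) (hΦ : Differentiable ℝ Φ) (hΦ' : Differentiable ℝ (∇ Φ))
    (hz : ∀ w, Φ z ≤ Φ w) : x =O[atTop] fun _ => (1 : ℝ) :=
  isBigO_one_of_smul_deriv_add_smul_eq (a := α - 1) (by linarith)
    ((eventually_ne_atTop β).mono fun _ => hasDerivAt_div_sub β) (tendsto_div_sub_atTop β)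
    (tendsto_mul_deriv_div_sub_atTop β) hsol.eventually_hasDerivAt
    (hsol.eventually_hasDerivAt_extrapolation hΦ')
    ((eventually_ne_atTop β).mono fun _ => smul_deriv_add_smul_eq_extrapolation_add)
    (hsol.isBigO_one_extrapolation hα hβ hconv hΦ hΦ' hz)

lemma exists_tendsto_inner (hsol : IsDINAVDSolution α β t₀ Φ x x' x'') (hα : 3 ≤ α)
    (hβ : 0 ≤ β) (hconv : ConvexOn ℝ univ Φ) (hΦ : Differentiable ℝ Φ)
    (hΦ' : Differentiable ℝ (∇ Φ)) (hz : ∀ w, Φ z ≤ Φ w) (hz' : ∀ w, Φ z' ≤ Φ w) :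
    ∃ L, Tendsto (fun t => ⟪x t, z' - z⟫) atTop (𝓝 L) := by
  obtain ⟨L, hL⟩ := hsol.exists_tendsto_inner_extrapolation hα hβ hconv hΦ hΦ' hz hz'
  have inner_deriv : ∀ {γ : ℝ → H} {γ' : H} {t : ℝ}, HasDerivAt γ γ' t →
      HasDerivAt (fun s => ⟪γ s, z' - z⟫) ⟪γ', z' - z⟫ t := fun {_ _ t} hγ => by
    simpa using hγ.inner ℝ (hasDerivAt_const t (z' - z))
  refine ⟨_, tendsto_of_smul_deriv_add_smul_eq (a := α - 1) (by linarith)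
    ((eventually_ne_atTop β).mono fun _ => hasDerivAt_div_sub β) (tendsto_div_sub_atTop β)
    (tendsto_mul_deriv_div_sub_atTop β) (hsol.eventually_hasDerivAt.mono fun _ => inner_deriv)
    ((hsol.eventually_hasDerivAt_extrapolation hΦ').mono fun _ => inner_deriv) ?_ hL⟩
  filter_upwards [eventually_ne_atTop β] with t hβt
  have := congrArg (⟪·, z' - z⟫)
    (smul_deriv_add_smul_eq_extrapolation_add (α := α) (Φ := Φ) (x := x) (x' := x') hβt)
  simpa only [inner_add_left, real_inner_smul_left, smul_eq_mul] using this

end IsDINAVDSolution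

theorem stmt13_general (α β t₀ : ℝ) (hα : 3 ≤ α) (hβ : 0 ≤ β)
    (Φ : H → ℝ) (hconv : ConvexOn ℝ Set.univ Φ) (hΦ : Differentiable ℝ Φ)
    (hΦ' : Differentiable ℝ (gradient Φ))
    (hinfc : ∀ (lam R : ℝ), 0 < R →
      IsCompact (closure {z : H | Φ z ≤ lam ∧ ‖z‖ ≤ R}))
    (hne : ∃ z : H, ∀ w, Φ z ≤ Φ w)
    (x x' x'' : ℝ → H) (hsol : IsDINAVDSolution α β t₀ Φ x x' x'') :
    ∃ xstar : H, (∀ w, Φ xstar ≤ Φ w) ∧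
      Tendsto (fun t => ‖x t - xstar‖) atTop (𝓝 0) := by
  obtain ⟨z₀, hz₀⟩ := hne
  have values_tendsto : Tendsto (fun t => Φ (x t)) atTop (𝓝 (Φ z₀)) :=
    hsol.tendsto_values hα hβ hconv hΦ hΦ' hz₀
  obtain ⟨R, hR, x_bdd⟩ := (hsol.isBigO_one hα hβ hconv hΦ hΦ' hz₀).exists_pos
  have x_mem : ∀ᶠ t in atTop, x t ∈ closure {z : H | Φ z ≤ Φ z₀ + 1 ∧ ‖z‖ ≤ R} := by
    filter_upwards [values_tendsto.eventually_le_const (lt_add_one _), x_bdd.bound]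
      with t h_value h_norm
    exact subset_closure ⟨h_value, by simpa using h_norm⟩
  have cluster_min : ∀ z, MapClusterPt z atTop x → ∀ w, Φ z ≤ Φ w := fun z hz w =>
    (eq_of_mapClusterPt_of_tendsto (hz.continuousAt_comp hΦ.continuous.continuousAt)
      values_tendsto).trans_le (hz₀ w)
  obtain ⟨z, hz, x_tendsto⟩ := exists_tendsto_of_tendsto_inner_sub
    (S := {z | ∀ w, Φ z ≤ Φ w}) (hinfc (Φ z₀ + 1) R hR) x_mem cluster_min
    fun z hz z' hz' => hsol.exists_tendsto_inner hα hβ hconv hΦ hΦ' hz hz'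
  exact ⟨z, hz, tendsto_iff_norm_sub_tendsto_zero.1 x_tendsto⟩

theorem stmt13 (α β t₀ : ℝ) (hα : 3 ≤ α) (hβ : 0 < β) (ht₀ : 0 < t₀)
    (Φ : H → ℝ) (hconv : ConvexOn ℝ Set.univ Φ) (hΦ : ContDiff ℝ 2 Φ)
    (hinfc : ∀ (lam R : ℝ), 0 < R →
      IsCompact (closure {z : H | Φ z ≤ lam ∧ ‖z‖ ≤ R}))
    (hne : ∃ z : H, ∀ w, Φ z ≤ Φ w)
    (x x' x'' : ℝ → H) (hsol : IsDINAVDSolution α β t₀ Φ x x' x'') :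
    ∃ xstar : H, (∀ w, Φ xstar ≤ Φ w) ∧
      Tendsto (fun t => ‖x t - xstar‖) atTop (𝓝 0) :=
  stmt13_general α β t₀ hα hβ.le Φ hconv (hΦ.differentiable two_ne_zero)
    (differentiable_gradient_of_contDiff_two hΦ) hinfc hne x x' x'' hsol
end

section
/- Let α > 3, β > 0, t₀ > 0, let Φ : H → ℝ be convex and twice continuously differentiable with argmin Φ nonempty and with ∇Φ uniformly monotone on bounded sets, and let x : [t₀, ∞) → H be a solution of (DIN-AVD). Then argmin Φ is a singleton {x*}, and x(t) converges strongly to x* as t → ∞. -/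
open Filter MeasureTheory Set
open scoped Topology RealInnerProductSpace

variable {H : Type*} [NormedAddCommGroup H] [InnerProductSpace ℝ H] [CompleteSpace H]

/-! Fix a minimizer `z`, exponents `0 ≤ p ≤ 2` and `p < c < α - p / 2`, and consider
`E(t) = (t² - β(c + 2 - α)t)(Φ(x) - Φ(z)) + ½‖c(x - z) + t(ẋ + β∇Φ(x))‖²
+ ½c(α + 1 - c - p)‖x - z‖²`.
Since `(ẋ + β∇Φ(x))˙ = -(α/t)ẋ - ∇Φ(x)`, the Hessian drops out of `Ė`, and convexity in the form
`Φ(x) - Φ(z) ≤ ⟪∇Φ(x), x - z⟫` gives `tĖ ≤ (2 - p)E` for large `t`. Hence `E = O(t^(2 - p))` and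
`Φ(x(t)) - min Φ = O(t^(-p))`; a positive `p` is available as soon as `α > 0`, and `p = 2` when
`α > 3`. Uniform monotonicity makes every minimizing family converge to the minimizer, so the
convergence of the values already forces that of the trajectory. -/

open Asymptotics

lemma antitoneOn_rpow_neg_mul {F F' : ℝ → ℝ} {q T : ℝ} (hT : 0 < T)
    (hF : ∀ t, T ≤ t → HasDerivAt F (F' t) t) (hle : ∀ t, T ≤ t → t * F' t ≤ q * F t) :
    AntitoneOn (fun t => t ^ (-q) * F t) (Ici T) := by
  have hderiv : ∀ t ∈ Ici T,
      HasDerivAt (fun s => s ^ (-q) * F s) (t ^ (-q - 1) * (t * F' t - q * F t)) t := by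
    intro t ht
    have ht₀ : t ≠ 0 := (hT.trans_le ht).ne'
    refine ((Real.hasDerivAt_rpow_const (p := -q) (Or.inl ht₀)).mul (hF t ht)).congr_deriv ?_
    have hsplit : t ^ (-q) = t ^ (-q - 1) * t := by
      rw [← Real.rpow_add_one ht₀, sub_add_cancel]
    rw [hsplit]
    ring
  refine antitoneOn_of_hasDerivWithinAt_nonpos (convex_Ici T)
    (fun t ht => (hderiv t ht).continuousAt.continuousWithinAt)
    (fun t ht => (hderiv t (interior_subset ht)).hasDerivWithinAt) fun t ht => ?_
  have hTt : T ≤ t := interior_subset ht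
  exact mul_nonpos_of_nonneg_of_nonpos (Real.rpow_nonneg (hT.le.trans hTt) _)
    (sub_nonpos.2 (hle t hTt))

lemma isBigO_rpow_of_mul_deriv_le {F F' : ℝ → ℝ} {q : ℝ}
    (hF : ∀ᶠ t in atTop, HasDerivAt F (F' t) t) (hle : ∀ᶠ t in atTop, t * F' t ≤ q * F t)
    (hnonneg : ∀ᶠ t in atTop, 0 ≤ F t) : F =O[atTop] fun t => t ^ q := by
  obtain ⟨T, hT⟩ :=
    eventually_atTop.1 ((eventually_gt_atTop 0).and (hF.and (hle.and hnonneg)))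
  have hanti : AntitoneOn (fun t => t ^ (-q) * F t) (Ici T) :=
    antitoneOn_rpow_neg_mul (hT T le_rfl).1 (fun t ht => (hT t ht).2.1)
      fun t ht => (hT t ht).2.2.1
  refine IsBigO.of_bound (T ^ (-q) * F T) ?_
  filter_upwards [eventually_ge_atTop T] with t ht
  obtain ⟨ht₀, -, -, hFt⟩ := hT t ht
  rw [Real.norm_of_nonneg hFt, Real.norm_of_nonneg (Real.rpow_nonneg ht₀.le q)]
  calc F t = t ^ (-q) * F t * t ^ q := by
        rw [mul_right_comm, ← Real.rpow_add ht₀, neg_add_cancel, Real.rpow_zero, one_mul]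
    _ ≤ T ^ (-q) * F T * t ^ q :=
        mul_le_mul_of_nonneg_right (hanti self_mem_Ici ht ht) (Real.rpow_nonneg ht₀.le q)

lemma eventually_le_const_mul_atTop {a : ℝ} (ha : 0 < a) (b : ℝ) : ∀ᶠ t in atTop, b ≤ a * t :=
  (tendsto_id.const_mul_atTop ha).eventually_ge_atTop b

lemma quadratic_form_nonneg {E : Type*} [NormedAddCommGroup E] [InnerProductSpace ℝ E]
    {a b d : ℝ} (ha : 0 < a) (hdisc : b ^ 2 ≤ 4 * a * d) (u v : E) :
    0 ≤ a * ‖u‖ ^ 2 + b * ⟪u, v⟫ + d * ‖v‖ ^ 2 := by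
  have hsquare : ‖(2 * a) • u + b • v‖ ^ 2
      = 4 * a ^ 2 * ‖u‖ ^ 2 + 4 * a * b * ⟪u, v⟫ + b ^ 2 * ‖v‖ ^ 2 := by
    rw [norm_add_sq_real, norm_smul, norm_smul, mul_pow, mul_pow, Real.norm_eq_abs,
      Real.norm_eq_abs, sq_abs, sq_abs, real_inner_smul_left, real_inner_smul_right]
    ring
  have hrest : 0 ≤ (4 * a * d - b ^ 2) * ‖v‖ ^ 2 :=
    mul_nonneg (sub_nonneg.2 hdisc) (sq_nonneg _)
  refine nonneg_of_mul_nonneg_right (a := 4 * a) ?_ (by positivity)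
  linarith [sq_nonneg ‖(2 * a) • u + b • v‖]

lemma inner_gradient_sub_le_of_convexOn {s : Set H} {f : H → ℝ} (hf : ConvexOn ℝ s f) {u v : H}
    (hu : u ∈ s) (hv : v ∈ s) (hd : DifferentiableAt ℝ f u) :
    ⟪gradient f u, v - u⟫ ≤ f v - f u := by
  let line : ℝ →ᵃ[ℝ] H := AffineMap.lineMap u v
  have hderiv : HasDerivAt (f ∘ line) ⟪gradient f u, v - u⟫ 0 := by
    have hline : HasDerivAt line (v - u) 0 := AffineMap.hasDerivAt_lineMap
    rw [inner_gradient_left]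
    exact HasFDerivAt.comp_hasDerivAt 0 (by simpa [line] using hd.hasFDerivAt) hline
  simpa [line, slope_def_field] using (hf.comp_affineMap line).le_slope_of_hasDerivAt
    (by simpa [line] using hu) (by simpa [line] using hv) zero_lt_one hderiv

lemma gradient_eq_zero_of_forall_le {f : H → ℝ} {z : H} (hz : ∀ w, f z ≤ f w) :
    gradient f z = 0 := by
  have hmin : IsLocalMin f z := Eventually.of_forall hz
  rw [gradient, hmin.fderiv_eq_zero, map_zero]

lemma inner_gradient_smul_sub_le_of_convexOn {f : H → ℝ} (hf : ConvexOn ℝ univ f)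
    (hd : Differentiable ℝ f) {z : H} (hz : ∀ w, f z ≤ f w) (u : H) {s : ℝ} (hs : 0 < s)
    (hs_half : s ≤ 1 / 2) :
    ⟪gradient f (z + s • (u - z)), s • (u - z)⟫ ≤ f u - f z := by
  let y := z + s • (u - z)
  have hzy : z - y = -(s • (u - z)) := by simp only [y]; abel
  have huy : u - y = (1 - s) • (u - z) := by simp only [y]; module
  have hbackward := inner_gradient_sub_le_of_convexOn hf (mem_univ y) (mem_univ z) (hd y)
  have hforward := inner_gradient_sub_le_of_convexOn hf (mem_univ y) (mem_univ u) (hd y)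
  rw [hzy, inner_neg_right, real_inner_smul_right] at hbackward
  rw [huy, real_inner_smul_right] at hforward
  have hinner : 0 ≤ ⟪gradient f y, u - z⟫ :=
    nonneg_of_mul_nonneg_right (by linarith [hz y]) hs
  calc ⟪gradient f y, s • (u - z)⟫ = s * ⟪gradient f y, u - z⟫ := real_inner_smul_right _ _ _
    _ ≤ (1 - s) * ⟪gradient f y, u - z⟫ := by gcongr; linarith
    _ ≤ f u - f z := by linarith [hz y]

lemma differentiable_gradient_of_contDiff {f : H → ℝ} (hf : ContDiff ℝ 2 f) :
    Differentiable ℝ (gradient f) :=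
  (InnerProductSpace.toDual ℝ H).symm.toContinuousLinearEquiv.differentiable.comp
    ((hf.fderiv_right (m := 1) (by norm_num)).differentiable (by norm_num))

/-- Tykhonov well-posedness of the minimization of `f`: `z` is a global minimizer and every
minimizing family converges to `z`. The second clause is stated for filters: whenever
`f (u i) → f z` along a filter, `u i → z` along it. -/
structure IsWellPosedMinimizer {X : Type*} [TopologicalSpace X] (f : X → ℝ) (z : X) : Prop where
  le : ∀ w, f z ≤ f w
  comap_nhds_le : comap f (𝓝 (f z)) ≤ 𝓝 z

namespace IsWellPosedMinimizer

variable {X : Type*} [TopologicalSpace X] {f : X → ℝ} {z : X}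

lemma tendsto (hz : IsWellPosedMinimizer f z) {ι : Type*} {l : Filter ι} {u : ι → X}
    (hu : Tendsto (fun i => f (u i)) l (𝓝 (f z))) : Tendsto u l (𝓝 z) :=
  (tendsto_comap_iff.2 hu).mono_right hz.comap_nhds_le

lemma eq_of_forall_le [T1Space X] (hz : IsWellPosedMinimizer f z) {y : X}
    (hy : ∀ w, f y ≤ f w) : y = z := by
  have hval : f y = f z := le_antisymm (hy z) (hz.le y)
  exact tendsto_const_nhds_iff.1 (hz.tendsto (l := atTop (α := ℕ)) (u := fun _ => y)
    (hval ▸ tendsto_const_nhds))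

end IsWellPosedMinimizer

/-- Uniform monotonicity on bounded sets of an operator `A`: on each ball of radius `r` there is a
nondecreasing modulus `ω` vanishing only at `0`. The modulus is a function on `ℝ` of which only the
values on `[0, ∞)` matter. -/
def UniformlyMonotoneOnBounded {E : Type*} [NormedAddCommGroup E] [InnerProductSpace ℝ E]
    (A : E → E) : Prop :=
  ∀ r : ℝ, 0 < r → ∃ ω : ℝ → ℝ,
    MonotoneOn ω (Set.Ici 0) ∧ (∀ s, 0 ≤ s → 0 ≤ ω s) ∧
    (∀ s, 0 ≤ s → (ω s = 0 ↔ s = 0)) ∧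
    ∀ u v : E, ‖u‖ ≤ r → ‖v‖ ≤ r → ω ‖u - v‖ ≤ ⟪A u - A v, u - v⟫

namespace UniformlyMonotoneOnBounded

variable {f : H → ℝ} {z : H}

lemma exists_forall_add_le (hmono : UniformlyMonotoneOnBounded (gradient f))
    (hconv : ConvexOn ℝ univ f) (hf : Differentiable ℝ f) (hz : ∀ w, f z ≤ f w)
    {ε : ℝ} (hε : 0 < ε) : ∃ δ > 0, ∀ u, ε ≤ ‖u - z‖ → f z + δ ≤ f u := by
  obtain ⟨ω, -, hnonneg, hzero, hω⟩ := hmono (‖z‖ + ε) (by positivity)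
  refine ⟨ω (ε / 2), (hnonneg _ (by positivity)).lt_of_ne'
    (mt (hzero _ (by positivity)).1 (by positivity)), fun u hu => ?_⟩
  have hdist : 0 < ‖u - z‖ := hε.trans_le hu
  let s := ε / (2 * ‖u - z‖)
  have hs : 0 < s := by positivity
  have hs_half : s ≤ 1 / 2 := by
    rw [div_le_iff₀ (by positivity)]
    linarith
  have hnorm : ‖s • (u - z)‖ = ε / 2 := by
    rw [norm_smul, Real.norm_of_nonneg hs.le]
    simp only [s]
    field_simp
  have hball : ‖z + s • (u - z)‖ ≤ ‖z‖ + ε := by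
    linarith [norm_add_le z (s • (u - z))]
  have hmodulus := hω _ z hball (by linarith)
  rw [add_sub_cancel_left, hnorm, gradient_eq_zero_of_forall_le hz, sub_zero] at hmodulus
  linarith [inner_gradient_smul_sub_le_of_convexOn hconv hf hz u hs hs_half]

lemma isWellPosedMinimizer (hmono : UniformlyMonotoneOnBounded (gradient f))
    (hconv : ConvexOn ℝ univ f) (hf : Differentiable ℝ f) (hz : ∀ w, f z ≤ f w) :
    IsWellPosedMinimizer f z where
  le := hz
  comap_nhds_le := by
    refine Metric.nhds_basis_ball.ge_iff.2 fun ε hε => ?_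
    obtain ⟨δ, hδ, hgap⟩ := hmono.exists_forall_add_le hconv hf hz hε
    refine mem_comap.2 ⟨Iio (f z + δ), Iio_mem_nhds (by linarith), fun u hu => ?_⟩
    rw [mem_ball_iff_norm]
    exact lt_of_not_ge fun h => (hgap u h).not_gt hu

end UniformlyMonotoneOnBounded

section Lyapunov

variable {α β p c t : ℝ} {Φ : H → ℝ} {z : H}

/-- The Lyapunov function of (DIN-AVD) anchored at `z`, at time `t`, position `u` and velocity `v`.
The weight `c` couples the anchor to the velocity, and `p` is the decay rate `t ^ (-p)` aimed at for
the values; `p = 2` is the classical choice for `3 < α`. The coefficient `c * (α + 1 - c - p)` is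
the one for which the cross terms `⟪u - z, v⟫` cancel in `t * E' - (2 - p) * E`. -/
noncomputable def dinLyapunov (α β p c : ℝ) (Φ : H → ℝ) (z : H) (t : ℝ) (u v : H) : ℝ :=
  (t ^ 2 - β * (c + 2 - α) * t) * (Φ u - Φ z)
    + 1 / 2 * ‖c • (u - z) + t • (v + β • gradient Φ u)‖ ^ 2
    + c * (α + 1 - c - p) / 2 * ‖u - z‖ ^ 2

/-- The time derivative of `dinLyapunov` along solutions of (DIN-AVD), as a function of time,
position and velocity. -/
noncomputable def dinLyapunovDeriv (α β p c : ℝ) (Φ : H → ℝ) (z : H) (t : ℝ) (u v : H) : ℝ :=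
  (2 * t - β * (c + 2 - α)) * (Φ u - Φ z) - c * (t - β) * ⟪gradient Φ u, u - z⟫
    - t * (α - 1 - c) * ‖v‖ ^ 2 - t * β * (t - β) * ‖gradient Φ u‖ ^ 2
    + c * (2 - p) * ⟪u - z, v⟫

lemma mul_dinLyapunovDeriv_sub (u v : H) :
    t * dinLyapunovDeriv α β p c Φ z t u v - (2 - p) * dinLyapunov α β p c Φ z t u v
      = t * ((p * t - β * (c + 2 - α) * (p - 1)) * (Φ u - Φ z)
          - c * (t - (p - 1) * β) * ⟪gradient Φ u, u - z⟫)
        - t ^ 2 * ((α - c - p / 2) * ‖v‖ ^ 2 + (2 - p) * β * ⟪v, gradient Φ u⟫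
          + β * (t - p * β / 2) * ‖gradient Φ u‖ ^ 2)
        - (2 - p) / 2 * (c * (α + 1 - p)) * ‖u - z‖ ^ 2 := by
  simp only [dinLyapunovDeriv, dinLyapunov, ← real_inner_self_eq_norm_sq, inner_add_left,
    inner_add_right, real_inner_smul_left, real_inner_smul_right, real_inner_comm v (gradient Φ u),
    real_inner_comm v (u - z), real_inner_comm (gradient Φ u) (u - z)]
  ring

lemma eventually_mul_dinLyapunovDeriv_le (hβ : 0 ≤ β) (hp : 0 ≤ p) (hp₂ : p ≤ 2) (hpc : p < c)
    (hcα : c + p / 2 < α) (hconv : ConvexOn ℝ univ Φ) (hΦ : Differentiable ℝ Φ)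
    (hz : ∀ w, Φ z ≤ Φ w) :
    ∀ᶠ t in atTop, ∀ u v, t * dinLyapunovDeriv α β p c Φ z t u v
      ≤ (2 - p) * dinLyapunov α β p c Φ z t u v := by
  have hμ : 0 < α - c - p / 2 := by linarith
  filter_upwards [eventually_ge_atTop 0, eventually_ge_atTop ((p - 1) * β),
    eventually_le_const_mul_atTop (sub_pos.2 hpc) (β * (p - 1) * (α - 2)),
    eventually_le_const_mul_atTop (mul_pos four_pos hμ)
      ((2 - p) ^ 2 * β + 4 * (α - c - p / 2) * (p * β / 2))] with t ht ht_grad ht_val ht_disc u v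
  have hvalues : (p * t - β * (c + 2 - α) * (p - 1)) * (Φ u - Φ z)
      ≤ c * (t - (p - 1) * β) * ⟪gradient Φ u, u - z⟫ := by
    have htangent : Φ u - Φ z ≤ ⟪gradient Φ u, u - z⟫ := by
      have := inner_gradient_sub_le_of_convexOn hconv (mem_univ u) (mem_univ z) (hΦ u)
      rw [← neg_sub u z, inner_neg_right] at this
      linarith
    calc (p * t - β * (c + 2 - α) * (p - 1)) * (Φ u - Φ z)
        ≤ c * (t - (p - 1) * β) * (Φ u - Φ z) :=
          mul_le_mul_of_nonneg_right (by linarith) (sub_nonneg.2 (hz u))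
      _ ≤ c * (t - (p - 1) * β) * ⟪gradient Φ u, u - z⟫ :=
          mul_le_mul_of_nonneg_left htangent
            (mul_nonneg (hp.trans hpc.le) (sub_nonneg.2 ht_grad))
  have hdissipation : 0 ≤ (α - c - p / 2) * ‖v‖ ^ 2 + (2 - p) * β * ⟪v, gradient Φ u⟫
      + β * (t - p * β / 2) * ‖gradient Φ u‖ ^ 2 := by
    refine quadratic_form_nonneg hμ ?_ v (gradient Φ u)
    calc ((2 - p) * β) ^ 2 = β * ((2 - p) ^ 2 * β) := by ring
      _ ≤ β * (4 * (α - c - p / 2) * (t - p * β / 2)) := by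
        refine mul_le_mul_of_nonneg_left ?_ hβ
        linarith
      _ = 4 * (α - c - p / 2) * (β * (t - p * β / 2)) := by ring
  have hanchor : 0 ≤ (2 - p) / 2 * (c * (α + 1 - p)) * ‖u - z‖ ^ 2 :=
    mul_nonneg (mul_nonneg (by linarith) (mul_nonneg (by linarith) (by linarith))) (sq_nonneg _)
  have hidentity := mul_dinLyapunovDeriv_sub (α := α) (β := β) (p := p) (c := c) (t := t)
    (Φ := Φ) (z := z) u v
  linarith [mul_nonneg ht (sub_nonneg.2 hvalues), mul_nonneg (sq_nonneg t) hdissipation]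

lemma eventually_sq_mul_sub_le_dinLyapunov (hc : 0 ≤ c) (hcα : c + p ≤ α + 1)
    (hz : ∀ w, Φ z ≤ Φ w) :
    ∀ᶠ t in atTop, ∀ u v, t ^ 2 * (Φ u - Φ z) ≤ 2 * dinLyapunov α β p c Φ z t u v := by
  filter_upwards [eventually_ge_atTop 0, eventually_ge_atTop (2 * (β * (c + 2 - α)))]
    with t ht ht' u v
  have hvalues : 0 ≤ t * (t - 2 * (β * (c + 2 - α))) * (Φ u - Φ z) :=
    mul_nonneg (mul_nonneg ht (sub_nonneg.2 ht')) (sub_nonneg.2 (hz u))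
  have hanchor : 0 ≤ c * (α + 1 - c - p) * ‖u - z‖ ^ 2 :=
    mul_nonneg (mul_nonneg hc (by linarith)) (sq_nonneg _)
  rw [dinLyapunov]
  linarith [sq_nonneg ‖c • (u - z) + t • (v + β • gradient Φ u)‖]

end Lyapunov

namespace IsDINAVDSolution

variable {α β t₀ p : ℝ} {Φ : H → ℝ} {z : H} {x x' x'' : ℝ → H}

lemma hasDerivAt_anchored_velocity (hsol : IsDINAVDSolution α β t₀ Φ x x' x'')
    (hΦ' : Differentiable ℝ (gradient Φ)) (c : ℝ) (z : H) {t : ℝ} (ht : t₀ ≤ t) (ht₀ : t ≠ 0) :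
    HasDerivAt (fun s => c • (x s - z) + s • (x' s + β • gradient Φ (x s)))
      ((c + 1 - α) • x' t + (β - t) • gradient Φ (x t)) t := by
  obtain ⟨hx, hx', -, hode⟩ := hsol
  have hgrad : HasDerivAt (fun s => gradient Φ (x s)) (fderiv ℝ (gradient Φ) (x t) (x' t)) t :=
    (hΦ' (x t)).hasFDerivAt.comp_hasDerivAt t (hx t ht)
  have hacc : x'' t + β • fderiv ℝ (gradient Φ) (x t) (x' t)
      = -((α / t) • x' t + gradient Φ (x t)) := by
    rw [eq_neg_iff_add_eq_zero, ← hode t ht]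
    abel
  refine (((hx t ht).sub_const z |>.const_smul c).add
    ((hasDerivAt_id t).smul ((hx' t ht).add (hgrad.const_smul β)))).congr_deriv ?_
  simp only [Pi.add_apply, Pi.smul_apply, id_eq, hacc]
  match_scalars <;> field_simp <;> ring

lemma hasDerivAt_dinLyapunov (hsol : IsDINAVDSolution α β t₀ Φ x x' x'')
    (hΦ : Differentiable ℝ Φ) (hΦ' : Differentiable ℝ (gradient Φ)) (p c : ℝ) (z : H) {t : ℝ}
    (ht : t₀ ≤ t) (ht₀ : t ≠ 0) :
    HasDerivAt (fun s => dinLyapunov α β p c Φ z s (x s) (x' s))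
      (dinLyapunovDeriv α β p c Φ z t (x t) (x' t)) t := by
  have hx := hsol.1 t ht
  have hvalue : HasDerivAt (fun s => Φ (x s)) ⟪gradient Φ (x t), x' t⟫ t := by
    rw [inner_gradient_left]
    exact (hΦ (x t)).hasFDerivAt.comp_hasDerivAt t hx
  have hcoeff : HasDerivAt (fun s : ℝ => s ^ 2 - β * (c + 2 - α) * s)
      (2 * t - β * (c + 2 - α)) t := by
    simpa using! (hasDerivAt_pow 2 t).sub ((hasDerivAt_id t).const_mul (β * (c + 2 - α)))
  have hanchored := hsol.hasDerivAt_anchored_velocity hΦ' c z ht ht₀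
  refine (((hcoeff.mul (hvalue.sub_const (Φ z))).add (hanchored.norm_sq.const_mul (1 / 2))).add
    ((hx.sub_const z).norm_sq.const_mul (c * (α + 1 - c - p) / 2))).congr_deriv ?_
  simp only [dinLyapunovDeriv, ← real_inner_self_eq_norm_sq, inner_add_left, inner_add_right,
    real_inner_smul_left, real_inner_smul_right, real_inner_comm (gradient Φ (x t)) (x' t),
    real_inner_comm (gradient Φ (x t)) (x t - z)]
  ring

theorem isBigO_sub_of_forall_le (hsol : IsDINAVDSolution α β t₀ Φ x x' x'') (hβ : 0 ≤ β)
    (hp : 0 ≤ p) (hp₂ : p ≤ 2) (hpα : 3 * p < 2 * α) (hconv : ConvexOn ℝ univ Φ)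
    (hΦ : Differentiable ℝ Φ) (hΦ' : Differentiable ℝ (gradient Φ)) (hz : ∀ w, Φ z ≤ Φ w) :
    (fun t => Φ (x t) - Φ z) =O[atTop] fun t => t ^ (-p) := by
  obtain ⟨c, hpc, hcα⟩ : ∃ c, p < c ∧ c < α - p / 2 := exists_between (by linarith)
  let E : ℝ → ℝ := fun t => dinLyapunov α β p c Φ z t (x t) (x' t)
  have hlower : ∀ᶠ t in atTop, t ^ 2 * (Φ (x t) - Φ z) ≤ 2 * E t :=
    (eventually_sq_mul_sub_le_dinLyapunov (by linarith) (by linarith) hz).mono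
      fun t ht => ht (x t) (x' t)
  have hE : E =O[atTop] fun t => t ^ (2 - p) := by
    refine isBigO_rpow_of_mul_deriv_le
      (F' := fun t => dinLyapunovDeriv α β p c Φ z t (x t) (x' t)) ?_ ?_ ?_
    · filter_upwards [eventually_ge_atTop t₀, eventually_ne_atTop 0] with t ht ht₀
      exact hsol.hasDerivAt_dinLyapunov hΦ hΦ' p c z ht ht₀
    · exact (eventually_mul_dinLyapunovDeriv_le hβ hp hp₂ hpc (by linarith) hconv hΦ hz).mono
        fun t ht => ht (x t) (x' t)
    · filter_upwards [hlower] with t ht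
      linarith [mul_nonneg (sq_nonneg t) (sub_nonneg.2 (hz (x t)))]
  have hvalues : (fun t => t ^ 2 * (Φ (x t) - Φ z)) =O[atTop] fun t => t ^ (2 - p) := by
    refine (IsBigO.of_bound 2 ?_).trans hE
    filter_upwards [hlower] with t ht
    rw [Real.norm_of_nonneg (mul_nonneg (sq_nonneg t) (sub_nonneg.2 (hz (x t))))]
    exact ht.trans (by gcongr; exact le_abs_self _)
  refine ((isBigO_refl (fun t : ℝ => t ^ (-2 : ℝ)) atTop).mul hvalues).congr' ?_ ?_
  · filter_upwards [eventually_gt_atTop 0] with t ht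
    rw [Real.rpow_neg ht.le, Real.rpow_two, inv_mul_cancel_left₀ (by positivity)]
  · filter_upwards [eventually_gt_atTop 0] with t ht
    rw [← Real.rpow_add ht]
    ring_nf

theorem tendsto_of_forall_le (hsol : IsDINAVDSolution α β t₀ Φ x x' x'') (hα : 0 < α)
    (hβ : 0 ≤ β) (hconv : ConvexOn ℝ univ Φ) (hΦ : Differentiable ℝ Φ)
    (hΦ' : Differentiable ℝ (gradient Φ)) (hz : ∀ w, Φ z ≤ Φ w) :
    Tendsto (fun t => Φ (x t)) atTop (𝓝 (Φ z)) := by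
  obtain ⟨p, hp, hpmin⟩ : ∃ p, 0 < p ∧ p < min 2 (2 * α / 3) :=
    exists_between (lt_min two_pos (by positivity))
  obtain ⟨hp₂, hpα⟩ := lt_min_iff.1 hpmin
  have hrate := hsol.isBigO_sub_of_forall_le hβ hp.le hp₂.le (by linarith) hconv hΦ hΦ' hz
  exact tendsto_sub_nhds_zero_iff.1 (hrate.trans_tendsto (tendsto_rpow_neg_atTop hp))

end IsDINAVDSolution

theorem stmt14_general {α β t₀ : ℝ} (hα : 0 < α) (hβ : 0 ≤ β) {Φ : H → ℝ}
    (hconv : ConvexOn ℝ Set.univ Φ) (hΦ : Differentiable ℝ Φ)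
    (hΦ' : Differentiable ℝ (gradient Φ)) (hwp : ∃ z, IsWellPosedMinimizer Φ z)
    {x x' x'' : ℝ → H} (hsol : IsDINAVDSolution α β t₀ Φ x x' x'') :
    ∃ xstar : H, (∀ w, Φ xstar ≤ Φ w) ∧ (∀ z : H, (∀ w, Φ z ≤ Φ w) → z = xstar) ∧
      Tendsto (fun t => ‖x t - xstar‖) atTop (𝓝 0) := by
  obtain ⟨z, hz⟩ := hwp
  have hvalues := hsol.tendsto_of_forall_le hα hβ hconv hΦ hΦ' hz.le
  exact ⟨z, hz.le, fun _ => hz.eq_of_forall_le,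
    tendsto_iff_norm_sub_tendsto_zero.1 (hz.tendsto hvalues)⟩

theorem stmt14 (α β t₀ : ℝ) (hα : 3 < α) (hβ : 0 < β) (ht₀ : 0 < t₀)
    (Φ : H → ℝ) (hconv : ConvexOn ℝ Set.univ Φ) (hΦ : ContDiff ℝ 2 Φ)
    (hne : ∃ z : H, ∀ w, Φ z ≤ Φ w)
    (hmono : ∀ r : ℝ, 0 < r → ∃ ω : ℝ → ℝ,
      MonotoneOn ω (Set.Ici 0) ∧ (∀ s, 0 ≤ s → 0 ≤ ω s) ∧
      (∀ s, 0 ≤ s → (ω s = 0 ↔ s = 0)) ∧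
      ∀ u v : H, ‖u‖ ≤ r → ‖v‖ ≤ r →
        ω ‖u - v‖ ≤ ⟪gradient Φ u - gradient Φ v, u - v⟫)
    (x x' x'' : ℝ → H) (hsol : IsDINAVDSolution α β t₀ Φ x x' x'') :
    ∃ xstar : H, (∀ w, Φ xstar ≤ Φ w) ∧ (∀ z : H, (∀ w, Φ z ≤ Φ w) → z = xstar) ∧
      Tendsto (fun t => ‖x t - xstar‖) atTop (𝓝 0) := by
  have hdiff : Differentiable ℝ Φ := hΦ.differentiable two_ne_zero
  exact stmt14_general (by linarith) hβ.le hconv hdiff (differentiable_gradient_of_contDiff hΦ)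
    (hne.imp fun _ => UniformlyMonotoneOnBounded.isWellPosedMinimizer hmono hconv hdiff) hsol
end

section
/- Let α ≥ 0, β > 0, t₀ > 0, let Φ : H → ℝ be convex and twice continuously differentiable, and let x : [t₀, ∞) → H be twice continuously differentiable. Define y : [t₀, ∞) → H by y(t) = −β(ẋ(t) + β∇Φ(x(t))) + (1 − αβ/t)·x(t). Then x satisfies ẍ(t) + (α/t)ẋ(t) + β∇²Φ(x(t))ẋ(t) + ∇Φ(x(t)) = 0 for all t ≥ t₀ if and only if the pair (x, y) satisfies, for all t ≥ t₀, the first-order system ẋ(t) + β∇Φ(x(t)) − (1/β − α/t)x(t) + (1/β)y(t) = 0 and ẏ(t) − (1/β − α/t + αβ/t²)x(t) + (1/β)y(t) = 0. -/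
open Filter MeasureTheory Set
open scoped Topology RealInnerProductSpace

variable {H : Type*} [NormedAddCommGroup H] [InnerProductSpace ℝ H] [CompleteSpace H]

/-!
The variable `y` is chosen so that the first equation of the system is its definition solved for
`ẋ`. By the chain rule, the derivative of `y` differs from the one prescribed by the second equation
by `-β` times the left-hand side of the second-order equation. Since `β ≠ 0` and derivatives are
unique, one equation holds exactly when the other does.
-/

section VectorField

variable {𝕜 E : Type*} [NontriviallyNormedField 𝕜] [NormedAddCommGroup E] [NormedSpace 𝕜 E]

/-- The left-hand side of (DIN-AVD) at time `t`, position `p`, velocity `v` and acceleration `a`,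
with an arbitrary vector field `V` in place of `∇Φ`. -/
noncomputable def dinavdResidual (α β : 𝕜) (V : E → E) (t : 𝕜) (p v a : E) : E :=
  a + (α / t) • v + β • fderiv 𝕜 V p v + V p

/-- The auxiliary variable `y` that reduces (DIN-AVD) to a first-order system, at time `t`,
position `p` and velocity `v`, with an arbitrary vector field `V` in place of `∇Φ`. -/
def dinavdAuxiliary (α β : 𝕜) (V : E → E) (t : 𝕜) (p v : E) : E :=
  (-β) • (v + β • V p) + (1 - α * β / t) • p

variable {α β t : 𝕜} {V : E → E}

theorem dinavdAuxiliary_velocity_equation (hβ : β ≠ 0) (p v : E) :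
    v + β • V p - (1 / β - α / t) • p + (1 / β) • dinavdAuxiliary α β V t p v = 0 := by
  unfold dinavdAuxiliary
  match_scalars <;> field

theorem hasDerivAt_const_sub_const_div (a c : 𝕜) (ht : t ≠ 0) :
    HasDerivAt (fun s => a - c / s) (c / t ^ 2) t := by
  simpa only [div_eq_mul_inv, mul_neg, neg_mul, one_mul, neg_neg] using
    ((hasDerivAt_inv ht).const_mul c).const_sub a

variable {x x' : 𝕜 → E} {a : E}

theorem hasDerivAt_dinavdAuxiliary (hβ : β ≠ 0) (ht : t ≠ 0) (hV : DifferentiableAt 𝕜 V (x t))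
    (hx : HasDerivAt x (x' t) t) (hx' : HasDerivAt x' a t) :
    HasDerivAt (fun s => dinavdAuxiliary α β V s (x s) (x' s))
      ((1 / β - α / t + α * β / t ^ 2) • x t - (1 / β) • dinavdAuxiliary α β V t (x t) (x' t)
        - β • dinavdResidual α β V t (x t) (x' t) a) t := by
  have hVx : HasDerivAt (fun s => V (x s)) (fderiv 𝕜 V (x t) (x' t)) t :=
    hV.hasFDerivAt.comp_hasDerivAt t hx
  have hcoeff : HasDerivAt (fun s => 1 - α * β / s) (α * β / t ^ 2) t :=
    hasDerivAt_const_sub_const_div 1 (α * β) ht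
  refine (((hx'.add (hVx.const_smul β)).const_smul (-β)).add (hcoeff.smul hx)).congr_deriv ?_
  unfold dinavdAuxiliary dinavdResidual
  match_scalars <;> field

theorem hasDerivAt_dinavdAuxiliary_iff (hβ : β ≠ 0) (ht : t ≠ 0)
    (hV : DifferentiableAt 𝕜 V (x t)) (hx : HasDerivAt x (x' t) t) (hx' : HasDerivAt x' a t) :
    HasDerivAt (fun s => dinavdAuxiliary α β V s (x s) (x' s))
        ((1 / β - α / t + α * β / t ^ 2) • x t
          - (1 / β) • dinavdAuxiliary α β V t (x t) (x' t)) t ↔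
      dinavdResidual α β V t (x t) (x' t) a = 0 := by
  have hderiv := hasDerivAt_dinavdAuxiliary (α := α) hβ ht hV hx hx'
  constructor
  · intro h
    exact (smul_eq_zero.mp (sub_eq_self.mp (hderiv.unique h))).resolve_left hβ
  · intro h
    rwa [h, smul_zero, sub_zero] at hderiv

theorem stmt16_general (α β : 𝕜) (hβ : β ≠ 0) (s : Set 𝕜) (hs : 0 ∉ s) (V : E → E)
    (x x' x'' : 𝕜 → E) (hV : ∀ t ∈ s, DifferentiableAt 𝕜 V (x t))
    (hx' : ∀ t ∈ s, HasDerivAt x (x' t) t) (hx'' : ∀ t ∈ s, HasDerivAt x' (x'' t) t)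
    (y : 𝕜 → E) (hy : ∀ t, y t = (-β) • (x' t + β • V (x t)) + (1 - α * β / t) • x t) :
    (∀ t ∈ s, x'' t + (α / t) • x' t + β • (fderiv 𝕜 V (x t)) (x' t) + V (x t) = 0) ↔
    ((∀ t ∈ s, x' t + β • V (x t) - (1 / β - α / t) • x t + (1 / β) • y t = 0) ∧
      (∀ t ∈ s,
        HasDerivAt y ((1 / β - α / t + α * β / t ^ 2) • x t - (1 / β) • y t) t)) := by
  obtain rfl : y = fun t => dinavdAuxiliary α β V t (x t) (x' t) := funext hy
  have hiff t (ht : t ∈ s) := hasDerivAt_dinavdAuxiliary_iff (α := α) hβ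
    (ne_of_mem_of_not_mem ht hs) (hV t ht) (hx' t ht) (hx'' t ht)
  have hfirst t (_ : t ∈ s) :=
    dinavdAuxiliary_velocity_equation (α := α) (t := t) (V := V) hβ (x t) (x' t)
  exact (forall₂_congr hiff).symm.trans (and_iff_right hfirst).symm

end VectorField

theorem contDiff_gradient {F : Type*} [NormedAddCommGroup F] [InnerProductSpace ℝ F]
    [CompleteSpace F] {f : F → ℝ} {m n : WithTop ℕ∞} (hf : ContDiff ℝ n f) (hmn : m + 1 ≤ n) :
    ContDiff ℝ m (gradient f) :=
  (InnerProductSpace.toDual ℝ F).symm.contDiff.comp (hf.fderiv_right hmn)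

theorem stmt16 (α β t₀ : ℝ) (hα : 0 ≤ α) (hβ : 0 < β) (ht₀ : 0 < t₀)
    (Φ : H → ℝ) (hconv : ConvexOn ℝ Set.univ Φ) (hΦ : ContDiff ℝ 2 Φ)
    (x x' x'' : ℝ → H)
    (hx' : ∀ t ∈ Set.Ici t₀, HasDerivAt x (x' t) t)
    (hx'' : ∀ t ∈ Set.Ici t₀, HasDerivAt x' (x'' t) t)
    (hcont : ContinuousOn x'' (Set.Ici t₀))
    (y : ℝ → H)
    (hy : ∀ t, y t = (-β) • (x' t + β • gradient Φ (x t)) + (1 - α * β / t) • x t) :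
    (∀ t ∈ Set.Ici t₀,
        x'' t + (α / t) • x' t + β • (fderiv ℝ (gradient Φ) (x t)) (x' t)
          + gradient Φ (x t) = 0) ↔
    ((∀ t ∈ Set.Ici t₀,
        x' t + β • gradient Φ (x t) - (1 / β - α / t) • x t + (1 / β) • y t = 0) ∧
      (∀ t ∈ Set.Ici t₀,
        HasDerivAt y ((1 / β - α / t + α * β / t ^ 2) • x t - (1 / β) • y t) t)) := by
  have hgrad : Differentiable ℝ (gradient Φ) :=
    (contDiff_gradient hΦ one_add_one_eq_two.le).differentiable one_ne_zero
  exact stmt16_general α β hβ.ne' (Ici t₀) ht₀.not_ge (gradient Φ) x x' x''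
    (fun t _ => hgrad (x t)) hx' hx'' y hy
end

section
/- Let Φ : H → ℝ be convex and twice continuously differentiable, let α, β > 0 and t₀ > 0, and let (x₀, ẋ₀) ∈ H × H. Then there exists a unique twice continuously differentiable curve x : [t₀, ∞) → H satisfying ẍ(t) + (α/t)ẋ(t) + β∇²Φ(x(t))ẋ(t) + ∇Φ(x(t)) = 0 for all t ≥ t₀, together with the initial conditions x(t₀) = x₀ and ẋ(t₀) = ẋ₀. -/
open Filter MeasureTheory Set
open scoped Topology RealInnerProductSpace

variable {H : Type*} [NormedAddCommGroup H] [InnerProductSpace ℝ H] [CompleteSpace H]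

/-!
With `G = ∇Φ` and `γ(t) = α/t`, the variable `y = x' + β G(x) + (γ - β⁻¹) x` turns the equation into
a first-order system `z' = D(t) z - A(z)` for `z = (x, y)`, where `D(t)` is bounded and linear and
`A(x, y) = (β G(x), 0)` is monotone. Such a vector field is one-sided Lipschitz, so two approximate
solutions separate at most at a Grönwall rate. Comparing two solutions gives uniqueness, comparing a
solution with `0` gives boundedness, and comparing it with its own time shifts gives uniform
continuity. A solution therefore has a limit at every finite time, and the local solutions of
Picard–Lindelöf extend to the whole half-line, although `G` need not be bounded on bounded sets.
-/

section OneSidedLipschitz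

open scoped Pointwise

variable {E : Type*} [NormedAddCommGroup E] [InnerProductSpace ℝ E]

/-- Monotone single-valued operators in the sense of Minty and Browder. -/
def IsMonotoneOperator (A : E → E) : Prop :=
  ∀ x y, 0 ≤ ⟪A x - A y, x - y⟫

/-- The one-sided Lipschitz condition on a vector field, under which trajectories separate at most
like `exp (K t)` forward in time. -/
def IsOneSidedLipschitz (K : ℝ) (f : E → E) : Prop :=
  ∀ x y, ⟪f x - f y, x - y⟫ ≤ K * ‖x - y‖ ^ 2

lemma IsMonotoneOperator.isOneSidedLipschitz_clm_sub {A : E → E} (hA : IsMonotoneOperator A)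
    {D : E →L[ℝ] E} {K : ℝ} (hD : ‖D‖ ≤ K) : IsOneSidedLipschitz K fun z ↦ D z - A z := by
  intro x y
  calc ⟪D x - A x - (D y - A y), x - y⟫
      = ⟪D (x - y), x - y⟫ - ⟪A x - A y, x - y⟫ := by rw [map_sub, ← inner_sub_left]; congr 1; abel
    _ ≤ ⟪D (x - y), x - y⟫ := sub_le_self _ (hA x y)
    _ ≤ ‖D (x - y)‖ * ‖x - y‖ := real_inner_le_norm _ _
    _ ≤ K * ‖x - y‖ * ‖x - y‖ := by gcongr; exact D.le_of_opNorm_le hD _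
    _ = K * ‖x - y‖ ^ 2 := by ring

lemma norm_sq_le_gronwallBound {u u' : ℝ → E} {a b K ε : ℝ}
    (hu : ∀ t ∈ Icc a b, HasDerivWithinAt u (u' t) (Icc a b) t)
    (hu' : ∀ t ∈ Ico a b, 2 * ⟪u t, u' t⟫ ≤ K * ‖u t‖ ^ 2 + ε) :
    ∀ t ∈ Icc a b, ‖u t‖ ^ 2 ≤ gronwallBound (‖u a‖ ^ 2) K ε (t - a) := by
  have hderiv : ∀ t ∈ Icc a b,
      HasDerivWithinAt (fun s ↦ ‖u s‖ ^ 2) (2 * ⟪u t, u' t⟫) (Icc a b) t :=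
    fun t ht ↦ (hu t ht).norm_sq
  refine le_gronwallBound_of_liminf_deriv_right_le
    (fun t ht ↦ (hderiv t ht).continuousWithinAt) (fun t ht r hr ↦ ?_) le_rfl hu'
  have hright := (hderiv t (Ico_subset_Icc_self ht)).mono_of_mem_nhdsWithin
    (Icc_mem_nhdsGE_of_mem ht)
  exact hright.liminf_right_slope_le hr

lemma norm_sub_sq_le_gronwallBound {v : ℝ → E → E} {f g g' : ℝ → E} {a b K ε : ℝ}
    (hv : ∀ t ∈ Icc a b, IsOneSidedLipschitz K (v t)) (hf : IsIntegralCurveOn f v (Icc a b))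
    (hg : ∀ t ∈ Icc a b, HasDerivWithinAt g (g' t) (Icc a b) t)
    (hg' : ∀ t ∈ Icc a b, ‖v t (g t) - g' t‖ ≤ ε) :
    ∀ t ∈ Icc a b,
      ‖f t - g t‖ ^ 2 ≤ gronwallBound (‖f a - g a‖ ^ 2) (2 * K + 1) (ε ^ 2) (t - a) := by
  refine norm_sq_le_gronwallBound (fun t ht ↦ (hf t ht).sub (hg t ht)) fun t ht ↦ ?_
  replace ht := Ico_subset_Icc_self ht
  have hdefect : ⟪v t (g t) - g' t, f t - g t⟫ ≤ ε * ‖f t - g t‖ :=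
    (real_inner_le_norm _ _).trans (by gcongr; exact hg' t ht)
  calc 2 * ⟪f t - g t, v t (f t) - g' t⟫
      = 2 * ⟪v t (f t) - v t (g t), f t - g t⟫ + 2 * ⟪v t (g t) - g' t, f t - g t⟫ := by
        rw [real_inner_comm, ← mul_add, ← inner_add_left, sub_add_sub_cancel]
    _ ≤ 2 * (K * ‖f t - g t‖ ^ 2) + 2 * (ε * ‖f t - g t‖) := by
        gcongr
        exact hv t ht _ _
    _ ≤ (2 * K + 1) * ‖f t - g t‖ ^ 2 + ε ^ 2 := by
        linarith [two_mul_le_add_sq ε ‖f t - g t‖]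

lemma eqOn_of_isIntegralCurveOn_of_isOneSidedLipschitz {v : ℝ → E → E} {f g : ℝ → E} {a b K : ℝ}
    (hv : ∀ t ∈ Icc a b, IsOneSidedLipschitz K (v t)) (hf : IsIntegralCurveOn f v (Icc a b))
    (hg : IsIntegralCurveOn g v (Icc a b)) (ha : f a = g a) : EqOn f g (Icc a b) := by
  intro t ht
  have hbound := norm_sub_sq_le_gronwallBound (ε := 0) hv hf hg (by simp) t ht
  simpa [ha, gronwallBound_ε0_δ0, sub_eq_zero] using hbound

lemma exists_norm_le_of_isIntegralCurveOn_Ico {v : ℝ → E → E} {γ : ℝ → E} {a b K C : ℝ}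
    (hK : 0 ≤ K) (hv : ∀ t ∈ Ico a b, IsOneSidedLipschitz K (v t))
    (hC : ∀ t ∈ Ico a b, ‖v t 0‖ ≤ C) (hγ : IsIntegralCurveOn γ v (Ico a b)) :
    ∃ R, ∀ t ∈ Ico a b, ‖γ t‖ ≤ R := by
  refine ⟨√(gronwallBound (‖γ a‖ ^ 2) (2 * K + 1) (C ^ 2) (b - a)), fun t ht ↦ ?_⟩
  have hsub : Icc a t ⊆ Ico a b := Icc_subset_Ico_right ht.2
  have hbound := norm_sub_sq_le_gronwallBound (g := 0) (g' := 0) (fun s hs ↦ hv s (hsub hs))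
    (hγ.mono hsub) (fun s _ ↦ hasDerivWithinAt_const s _ 0)
    (by simpa using fun s hs ↦ hC s (hsub hs)) t (right_mem_Icc.2 ht.1)
  have hmono : Monotone (gronwallBound (‖γ a‖ ^ 2) (2 * K + 1) (C ^ 2)) :=
    gronwallBound_mono (by positivity) (by positivity) (by positivity)
  simp only [Pi.zero_apply, sub_zero] at hbound
  exact Real.le_sqrt_of_sq_le (hbound.trans (hmono (by linarith [ht.2])))

/-- The time shift `γ (· + h)` solves the equation up to an error `C h`, so it stays close to
`γ`. -/
lemma norm_shift_sub_sq_le_gronwallBound {v : ℝ → E → E} {γ : ℝ → E} {a b K C h : ℝ} (hK : 0 ≤ K)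
    (hv : ∀ t ∈ Ico a b, IsOneSidedLipschitz K (v t)) (hγ : IsIntegralCurveOn γ v (Ico a b))
    (hC : ∀ s ∈ Ico a b, ∀ t ∈ Ico a b, ‖v s (γ t) - v t (γ t)‖ ≤ C * |s - t|) (hh : 0 ≤ h)
    {t : ℝ} (hat : a ≤ t) (htb : t + h < b) :
    ‖γ t - γ (t + h)‖ ^ 2 ≤
      gronwallBound (‖γ a - γ (a + h)‖ ^ 2) (2 * K + 1) ((C * h) ^ 2) (b - a) := by
  have hsub : Icc a t ⊆ Ico a b := Icc_subset_Ico_right (by linarith)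
  have hshift : Icc a t ⊆ -h +ᵥ Ico a b := by
    intro s hs
    simp only [mem_vadd_set_iff_neg_vadd_mem, vadd_eq_add, neg_neg, mem_Ico]
    constructor <;> linarith [hs.1, hs.2]
  have hbound := norm_sub_sq_le_gronwallBound (fun s hs ↦ hv s (hsub hs)) (hγ.mono hsub)
    ((hγ.comp_add h).mono hshift) (ε := C * h) (fun s hs ↦ ?_) t (right_mem_Icc.2 hat)
  · have hmono : Monotone (gronwallBound (‖γ a - γ (a + h)‖ ^ 2) (2 * K + 1) ((C * h) ^ 2)) :=
      gronwallBound_mono (by positivity) (by positivity) (by positivity)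
    exact hbound.trans (hmono (by linarith))
  · have hs' : s + h ∈ Ico a b := ⟨by linarith [hs.1], by linarith [hs.2]⟩
    simpa [abs_of_nonneg hh] using hC s (hsub hs) (s + h) hs'

lemma tendsto_gronwallBound_zero {ι : Type*} {l : Filter ι} {δ ε : ι → ℝ} (K x : ℝ)
    (hδ : Tendsto δ l (𝓝 0)) (hε : Tendsto ε l (𝓝 0)) :
    Tendsto (fun i ↦ gronwallBound (δ i) K (ε i) x) l (𝓝 0) := by
  rcases eq_or_ne K 0 with rfl | hK
  · simpa [gronwallBound_K0] using hδ.add (hε.mul_const x)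
  · simpa [gronwallBound_of_K_ne_0 hK] using
      (hδ.mul_const (Real.exp (K * x))).add
        ((hε.div_const K).mul_const (Real.exp (K * x) - 1))

lemma uniformContinuousOn_of_dist_sq_le {X : Type*} [PseudoMetricSpace X] {f : ℝ → X} {s : Set ℝ}
    {ω : ℝ → ℝ} (hω : Tendsto ω (𝓝[≥] 0) (𝓝 0))
    (hf : ∀ t ∈ s, ∀ u ∈ s, t ≤ u → dist (f t) (f u) ^ 2 ≤ ω (u - t)) :
    UniformContinuousOn f s := by
  rw [Metric.uniformContinuousOn_iff]
  intro ε hε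
  obtain ⟨δ, hδ, hsmall⟩ :=
    mem_nhdsGE_iff_exists_Ico_subset.1 (hω.eventually_lt_const (by positivity : 0 < ε ^ 2))
  refine ⟨δ, hδ, fun t ht u hu htu ↦ ?_⟩
  wlog hle : t ≤ u generalizing t u
  · rw [dist_comm] at htu ⊢
    exact this u hu t ht htu (le_of_not_ge hle)
  have hsub : 0 ≤ u - t := sub_nonneg.2 hle
  rw [dist_comm, Real.dist_eq, abs_of_nonneg hsub] at htu
  exact lt_of_pow_lt_pow_left₀ 2 hε.le ((hf t ht u hu hle).trans_lt (hsmall ⟨hsub, htu⟩))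

lemma uniformContinuousOn_of_isIntegralCurveOn_Ico {v : ℝ → E → E} {γ : ℝ → E} {a b K C : ℝ}
    (hK : 0 ≤ K) (hv : ∀ t ∈ Ico a b, IsOneSidedLipschitz K (v t))
    (hγ : IsIntegralCurveOn γ v (Ico a b))
    (hC : ∀ s ∈ Ico a b, ∀ t ∈ Ico a b, ‖v s (γ t) - v t (γ t)‖ ≤ C * |s - t|) :
    UniformContinuousOn γ (Ico a b) := by
  rcases le_or_gt b a with hba | hab
  · simp [Ico_eq_empty_of_le hba, UniformContinuousOn]
  have hγa : Tendsto (fun h ↦ ‖γ a - γ (a + h)‖ ^ 2) (𝓝[≥] 0) (𝓝 0) := by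
    have hcont : ContinuousWithinAt γ (Ici a) a :=
      (hγ.continuousWithinAt (left_mem_Ico.2 hab)).mono_of_mem_nhdsWithin (Ico_mem_nhdsGE hab)
    have hadd : Tendsto (fun h ↦ a + h) (𝓝[≥] 0) (𝓝[≥] a) :=
      tendsto_nhdsWithin_iff.2
        ⟨((continuous_const_add a).tendsto' 0 a (add_zero a)).mono_left nhdsWithin_le_nhds,
          by filter_upwards [self_mem_nhdsWithin] with h hh using by simpa using hh⟩
    simpa using ((tendsto_const_nhds (x := γ a)).sub (hcont.tendsto.comp hadd)).norm.pow 2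
  have hdefect : Tendsto (fun h ↦ (C * h) ^ 2) (𝓝[≥] (0 : ℝ)) (𝓝 0) :=
    ((by fun_prop : Continuous fun h : ℝ ↦ (C * h) ^ 2).tendsto' 0 0 (by simp)).mono_left
      nhdsWithin_le_nhds
  have hmodulus := tendsto_gronwallBound_zero (2 * K + 1) (b - a) hγa hdefect
  refine uniformContinuousOn_of_dist_sq_le hmodulus fun s hs t ht hst ↦ ?_
  have hbound := norm_shift_sub_sq_le_gronwallBound hK hv hγ hC (sub_nonneg.2 hst) hs.1
    (by linarith [ht.2] : s + (t - s) < b)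
  rwa [add_sub_cancel, ← dist_eq_norm] at hbound

end OneSidedLipschitz

lemma Ici_subset_of_forall_Ico_subset {α : Type*} [ConditionallyCompleteLinearOrder α] {s : Set α}
    {a : α} (ha : a ∈ s) (hdown : ∀ t ∈ s, Icc a t ⊆ s) (hnomax : ∀ t ∈ s, ∃ T ∈ s, t < T)
    (hsup : ∀ b > a, Ico a b ⊆ s → b ∈ s) : Ici a ⊆ s := by
  by_contra hne
  obtain ⟨T₀, haT₀, hT₀⟩ := not_subset.1 hne
  have hbdd : BddAbove s :=
    ⟨T₀, fun T hT ↦ le_of_not_ge fun hle ↦ hT₀ (hdown T hT ⟨haT₀, hle⟩)⟩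
  have hlt_sup : ∀ T ∈ s, T < sSup s := by
    intro T hT
    obtain ⟨T', hT', hTT'⟩ := hnomax T hT
    exact hTT'.trans_le (le_csSup hbdd hT')
  have hsub : Ico a (sSup s) ⊆ s := by
    intro t ht
    obtain ⟨T, hT, htT⟩ := exists_lt_of_lt_csSup ⟨a, ha⟩ ht.2
    exact hdown T hT ⟨ht.1, htT.le⟩
  exact (hlt_sup _ (hsup _ (hlt_sup a ha) hsub)).false

section Gluing

variable {E : Type*} [NormedAddCommGroup E] [NormedSpace ℝ E]

lemma hasDerivWithinAt_ite_le {f g : ℝ → E} {d : E} {s : Set ℝ} {a t : ℝ} (hfg : f a = g a)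
    (hf : t ≤ a → HasDerivWithinAt f d (s ∩ Iic a) t)
    (hg : a ≤ t → HasDerivWithinAt g d (s ∩ Ici a) t) :
    HasDerivWithinAt (fun r ↦ if r ≤ a then f r else g r) d s t := by
  set γ : ℝ → E := fun r ↦ if r ≤ a then f r else g r with hγ
  have heq_left : EqOn γ f (s ∩ Iic a) := fun r hr ↦ if_pos hr.2
  have heq_right : EqOn γ g (s ∩ Ici a) := fun r hr ↦ by
    rcases (mem_Ici.1 hr.2).eq_or_lt with rfl | har
    · simpa [hγ] using hfg
    · exact if_neg har.not_ge
  have hleft : HasDerivWithinAt γ d (s ∩ Iic a) t := by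
    rcases le_or_gt t a with hta | hta
    · exact (hf hta).congr heq_left (if_pos hta)
    · exact hasDerivWithinAt_iff_hasFDerivWithinAt.2 <| .of_notMem_closure fun ht ↦
        hta.not_ge (closure_minimal inter_subset_right isClosed_Iic ht)
  have hright : HasDerivWithinAt γ d (s ∩ Ici a) t := by
    rcases le_or_gt a t with hat | hat
    · refine (hg hat).congr heq_right ?_
      rcases hat.eq_or_lt with rfl | hat
      · simpa [hγ] using hfg
      · exact if_neg hat.not_ge
    · exact hasDerivWithinAt_iff_hasFDerivWithinAt.2 <| .of_notMem_closure fun ht ↦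
        hat.not_ge (closure_minimal inter_subset_right isClosed_Ici ht)
  simpa [← inter_union_distrib_left, Iic_union_Ici] using hleft.union hright

lemma exists_eqOn_forall_hasDerivAt {f f' : ℝ → E} {a : ℝ}
    (hf : ∀ t ∈ Ici a, HasDerivWithinAt f (f' t) (Ici a) t) :
    ∃ g : ℝ → E, EqOn g f (Ici a) ∧ ∀ t ∈ Ici a, HasDerivAt g (f' t) t := by
  set tangent : ℝ → E := fun t ↦ f a + (t - a) • f' a
  have htangent : HasDerivAt tangent (f' a) a := by
    simpa only [one_smul, id] using
      (((hasDerivAt_id a).sub_const a).smul_const (f' a)).const_add (f a)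
  have hvalue : tangent a = f a := by simp [tangent]
  refine ⟨fun t ↦ if t ≤ a then tangent t else f t, fun t ht ↦ ?_, fun t ht ↦ ?_⟩
  · rcases (mem_Ici.1 ht).eq_or_lt with rfl | hat
    · simpa using hvalue
    · exact if_neg hat.not_ge
  · rw [← hasDerivWithinAt_univ]
    refine hasDerivWithinAt_ite_le hvalue (fun hta ↦ ?_) fun _ ↦ by simpa using hf t ht
    obtain rfl : t = a := le_antisymm hta ht
    exact htangent.hasDerivWithinAt

variable {v : ℝ → E → E} {a b c : ℝ}

lemma exists_isIntegralCurveOn_Icc_union {f g : ℝ → E} (hab : a ≤ b) (hbc : b ≤ c)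
    (hf : IsIntegralCurveOn f v (Icc a b)) (hg : IsIntegralCurveOn g v (Icc b c))
    (hfg : f b = g b) : ∃ γ : ℝ → E, γ a = f a ∧ IsIntegralCurveOn γ v (Icc a c) := by
  refine ⟨fun t ↦ if t ≤ b then f t else g t, if_pos hab, fun t ht ↦ ?_⟩
  have hIic : Icc a c ∩ Iic b = Icc a b := by
    rw [← Ici_inter_Iic, inter_assoc, Iic_inter_Iic, inf_of_le_right hbc]; rfl
  have hIci : Icc a c ∩ Ici b = Icc b c := by
    rw [inter_comm, ← Ici_inter_Iic, ← inter_assoc, Ici_inter_Ici, sup_of_le_left hab]; rfl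
  refine hasDerivWithinAt_ite_le hfg (fun htb ↦ ?_) fun hbt ↦ ?_
  · simpa only [hIic, if_pos htb] using hf t ⟨ht.1, htb⟩
  · rw [hIci]
    rcases hbt.eq_or_lt with rfl | hbt'
    · simpa [hfg] using hg b ⟨le_rfl, ht.2⟩
    · simpa only [if_neg hbt'.not_ge] using hg t ⟨hbt, ht.2⟩

lemma exists_isIntegralCurveOn_of_forall_Icc {J : Set ℝ} {x₀ : E} (haJ : a ∈ J)
    (hJ : J ⊆ Ici a) (hJmax : ∀ t ∈ J, ∃ T ∈ J, t < T)
    (huniq : ∀ T ∈ J, ∀ f g : ℝ → E, IsIntegralCurveOn f v (Icc a T) →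
      IsIntegralCurveOn g v (Icc a T) → f a = g a → EqOn f g (Icc a T))
    (hex : ∀ T ∈ J, ∃ γ : ℝ → E, γ a = x₀ ∧ IsIntegralCurveOn γ v (Icc a T)) :
    ∃ γ : ℝ → E, γ a = x₀ ∧ IsIntegralCurveOn γ v J := by
  choose! curve hcurve_init hcurve using hex
  have hagree : ∀ T ∈ J, EqOn (fun t ↦ curve t t) (curve T) (J ∩ Icc a T) := by
    intro T hT s hs
    exact huniq s hs.1 _ _ (hcurve s hs.1) ((hcurve T hT).mono (Icc_subset_Icc_right hs.2.2))
      ((hcurve_init s hs.1).trans (hcurve_init T hT).symm) (right_mem_Icc.2 hs.2.1)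
  refine ⟨fun t ↦ curve t t, hcurve_init a haJ, fun t ht ↦ ?_⟩
  obtain ⟨T, hT, htT⟩ := hJmax t ht
  have htmem : t ∈ Icc a T := ⟨hJ ht, htT.le⟩
  have hnhds : J ∩ Icc a T ∈ 𝓝[J] t := by
    filter_upwards [self_mem_nhdsWithin, nhdsWithin_le_nhds (Iio_mem_nhds htT)] with s hs hsT
      using ⟨hs, hJ hs, hsT.le⟩
  have hderiv := ((hcurve T hT t htmem).mono inter_subset_right).congr (hagree T hT)
    (hagree T hT ⟨ht, htmem⟩)
  rw [← hagree T hT ⟨ht, htmem⟩] at hderiv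
  exact hderiv.mono_of_mem_nhdsWithin hnhds

lemma isIntegralCurveOn_update_Icc {γ : ℝ → E} {p : E} (hab : a < b)
    (hv : ContinuousOn (Function.uncurry v) (Icc a b ×ˢ univ))
    (hγ : IsIntegralCurveOn γ v (Ico a b)) (hp : Tendsto γ (𝓝[<] b) (𝓝 p)) :
    IsIntegralCurveOn (Function.update γ b p) v (Icc a b) := by
  set γ₁ := Function.update γ b p
  have hγ₁b : γ₁ b = p := Function.update_self ..
  have heq : EqOn γ₁ γ (Iio b) := fun t ht ↦ Function.update_of_ne (mem_Iio.1 ht).ne ..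
  have hderiv : ∀ t ∈ Ioo a b, HasDerivAt γ₁ (v t (γ t)) t := fun t ht ↦
    ((hγ t (Ioo_subset_Ico_self ht)).hasDerivAt (Ico_mem_nhds ht.1 ht.2)).congr_of_eventuallyEq
      (heq.eventuallyEq_of_mem (Iio_mem_nhds ht.2))
  intro t ht
  rcases ht.2.eq_or_lt with rfl | htb
  · have hcont : ContinuousWithinAt γ₁ (Ioo a t) t := by
      rw [ContinuousWithinAt, hγ₁b]
      exact (hp.congr' (heq.symm.eventuallyEq_of_mem self_mem_nhdsWithin)).mono_left
        (nhdsWithin_mono _ Ioo_subset_Iio_self)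
    have hIoo : Ioo a t ∈ 𝓝[<] t := Ioo_mem_nhdsLT hab
    have hgraph : Tendsto (fun s ↦ (s, γ s)) (𝓝[<] t) (𝓝[Icc a t ×ˢ univ] (t, p)) :=
      tendsto_nhdsWithin_iff.2 ⟨(tendsto_id.mono_left nhdsWithin_le_nhds).prodMk_nhds hp,
        by filter_upwards [hIoo] with s hs using ⟨Ioo_subset_Icc_self hs, mem_univ _⟩⟩
    have hlim : Tendsto (fun s ↦ deriv γ₁ s) (𝓝[<] t) (𝓝 (v t p)) :=
      ((hv (t, p) ⟨ht, mem_univ _⟩).tendsto.comp hgraph).congr' (by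
        filter_upwards [hIoo] with s hs using (hderiv s hs).deriv.symm)
    rw [hγ₁b]
    exact (hasDerivWithinAt_Iic_of_tendsto_deriv
      (fun s hs ↦ (hderiv s hs).differentiableAt.differentiableWithinAt) hcont hIoo hlim).mono
        Icc_subset_Iic_self
  · have hIco := (hγ t ⟨ht.1, htb⟩).congr (heq.mono Ico_subset_Iio_self) (heq htb)
    rw [heq htb]
    refine hIco.mono_of_mem_nhdsWithin ?_
    filter_upwards [self_mem_nhdsWithin, nhdsWithin_le_nhds (Iio_mem_nhds htb)] with s hs hsb
      using ⟨hs.1, hsb⟩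

end Gluing

section Existence

variable {E : Type*} [NormedAddCommGroup E] [NormedSpace ℝ E] [CompleteSpace E]
  {v : ℝ → E → E} {a b : ℝ}

lemma exists_isIntegralCurveOn_Icc_of_uniformContinuousOn {γ : ℝ → E} (hab : a < b)
    (hv : ContinuousOn (Function.uncurry v) (Icc a b ×ˢ univ))
    (hγ : IsIntegralCurveOn γ v (Ico a b)) (hγ_unif : UniformContinuousOn γ (Ico a b)) :
    ∃ γ₁ : ℝ → E, γ₁ a = γ a ∧ IsIntegralCurveOn γ₁ v (Icc a b) := by
  have hcauchy : Cauchy (map γ (𝓝[<] b)) :=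
    (cauchy_nhds.mono nhdsWithin_le_nhds).map_of_le hγ_unif
      (le_principal_iff.2 (Ico_mem_nhdsLT hab))
  obtain ⟨p, hp⟩ := CompleteSpace.complete hcauchy
  exact ⟨_, Function.update_of_ne hab.ne .., isIntegralCurveOn_update_Icc hab hv hγ hp⟩

lemma exists_isIntegralCurveOn_Icc_of_lipschitzOnWith {x : E} {r : ℝ} {K : NNReal} (hab : a < b)
    (hr : 0 < r) (hcont : ∀ z ∈ Metric.closedBall x r, ContinuousOn (v · z) (Icc a b))
    (hlip : ∀ t ∈ Icc a b, LipschitzOnWith K (v t) (Metric.closedBall x r)) :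
    ∃ T > a, ∃ γ : ℝ → E, γ a = x ∧ IsIntegralCurveOn γ v (Icc a T) := by
  have hx : x ∈ Metric.closedBall x r := Metric.mem_closedBall_self hr.le
  obtain ⟨M, hM⟩ := isCompact_Icc.exists_bound_of_continuousOn (hcont x hx)
  have hM₀ : 0 ≤ M := (norm_nonneg _).trans (hM a (left_mem_Icc.2 hab.le))
  set L : ℝ := M + K * r + 1
  have hL : 0 < L := by positivity
  have hbound : ∀ t ∈ Icc a b, ∀ z ∈ Metric.closedBall x r, ‖v t z‖ ≤ L := by
    intro t ht z hz
    have hdist : ‖v t z - v t x‖ ≤ K * r :=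
      ((hlip t ht).norm_sub_le hz hx).trans (by gcongr; exact mem_closedBall_iff_norm.1 hz)
    linarith [norm_le_norm_sub_add (v t z) (v t x), hM t ht]
  set T := min b (a + r / L)
  have haT : a < T := lt_min hab (lt_add_of_pos_right a (by positivity))
  have hsub : Icc a T ⊆ Icc a b := Icc_subset_Icc_right (min_le_left _ _)
  have hPL : IsPicardLindelof v (⟨a, left_mem_Icc.2 haT.le⟩ : Icc a T) x r.toNNReal 0
      L.toNNReal K := by
    refine ⟨?_, ?_, ?_, ?_⟩ <;> simp only [Real.coe_toNNReal r hr.le, Real.coe_toNNReal L hL.le]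
    · exact fun t ht ↦ hlip t (hsub ht)
    · exact fun z hz ↦ (hcont z hz).mono hsub
    · exact fun t ht z hz ↦ hbound t (hsub ht) z hz
    · have hTa : T - a ≤ r / L := by linarith [min_le_right b (a + r / L)]
      rw [sub_self, max_eq_left (sub_nonneg.2 haT.le), NNReal.coe_zero, sub_zero, mul_comm]
      exact (le_div_iff₀ hL).1 hTa
  exact ⟨T, haT, hPL.exists_eq_forall_mem_Icc_hasDerivWithinAt₀⟩

theorem exists_isIntegralCurveOn_Ici (hv : ContinuousOn (Function.uncurry v) (Ici a ×ˢ univ))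
    (hlocal : ∀ t ∈ Ici a, ∀ x : E, ∃ T > t, ∃ γ : ℝ → E,
      γ t = x ∧ IsIntegralCurveOn γ v (Icc t T))
    (huniq : ∀ T ∈ Ici a, ∀ f g : ℝ → E, IsIntegralCurveOn f v (Icc a T) →
      IsIntegralCurveOn g v (Icc a T) → f a = g a → EqOn f g (Icc a T))
    (hunif : ∀ b > a, ∀ γ : ℝ → E, IsIntegralCurveOn γ v (Ico a b) →
      UniformContinuousOn γ (Ico a b)) (x₀ : E) :
    ∃ γ : ℝ → E, γ a = x₀ ∧ IsIntegralCurveOn γ v (Ici a) := by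
  set times : Set ℝ := {T ∈ Ici a | ∃ γ : ℝ → E, γ a = x₀ ∧ IsIntegralCurveOn γ v (Icc a T)}
  have ha : a ∈ times := by
    obtain ⟨T, haT, γ, hγ_init, hγ⟩ := hlocal a self_mem_Ici x₀
    exact ⟨self_mem_Ici, γ, hγ_init, hγ.mono (Icc_subset_Icc_right haT.le)⟩
  have hnomax : ∀ t ∈ times, ∃ T ∈ times, t < T := by
    rintro t ⟨hat, f, hf_init, hf⟩
    obtain ⟨T, htT, g, hg_init, hg⟩ := hlocal t hat (f t)
    obtain ⟨γ, hγ_init, hγ⟩ := exists_isIntegralCurveOn_Icc_union hat htT.le hf hg hg_init.symm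
    exact ⟨T, ⟨le_trans hat htT.le, γ, hγ_init.trans hf_init, hγ⟩, htT⟩
  obtain ⟨γ, hγ_init, hγ⟩ := exists_isIntegralCurveOn_of_forall_Icc ha (sep_subset _ _) hnomax
    (fun T hT ↦ huniq T hT.1) fun T hT ↦ hT.2
  have hdown : ∀ T ∈ times, Icc a T ⊆ times := by
    rintro T ⟨-, f, hf_init, hf⟩ t ht
    exact ⟨ht.1, f, hf_init, hf.mono (Icc_subset_Icc_right ht.2)⟩
  have hsup : ∀ b > a, Ico a b ⊆ times → b ∈ times := by
    intro b hab hb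
    have hγb := hγ.mono hb
    obtain ⟨γ₁, hγ₁_init, hγ₁⟩ := exists_isIntegralCurveOn_Icc_of_uniformContinuousOn hab
      (hv.mono (prod_mono_left Icc_subset_Ici_self)) hγb (hunif b hab γ hγb)
    exact ⟨hab.le, γ₁, hγ₁_init.trans hγ_init, hγ₁⟩
  exact ⟨γ, hγ_init, hγ.mono (Ici_subset_of_forall_Ico_subset ha hdown hnomax hsup)⟩

end Existence

section MonotonePerturbation

variable {E : Type*} [NormedAddCommGroup E] [InnerProductSpace ℝ E] {A : E → E}
  {D : ℝ → E →L[ℝ] E} {a b : ℝ}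

lemma exists_isOneSidedLipschitz_Icc (hA : IsMonotoneOperator A) (hD : ContinuousOn D (Icc a b)) :
    ∃ K, 0 ≤ K ∧ ∀ t ∈ Icc a b, IsOneSidedLipschitz K fun z ↦ D t z - A z := by
  obtain ⟨K, hK⟩ := isCompact_Icc.exists_bound_of_continuousOn hD
  exact ⟨max K 0, le_max_right _ _,
    fun t ht ↦ hA.isOneSidedLipschitz_clm_sub (le_max_of_le_left (hK t ht))⟩

lemma eqOn_Icc_of_isMonotoneOperator (hA : IsMonotoneOperator A) (hD : ContinuousOn D (Icc a b))
    {f g : ℝ → E} (hf : IsIntegralCurveOn f (fun t z ↦ D t z - A z) (Icc a b))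
    (hg : IsIntegralCurveOn g (fun t z ↦ D t z - A z) (Icc a b)) (ha : f a = g a) :
    EqOn f g (Icc a b) := by
  obtain ⟨K, -, hK⟩ := exists_isOneSidedLipschitz_Icc hA hD
  exact eqOn_of_isIntegralCurveOn_of_isOneSidedLipschitz hK hf hg ha

lemma uniformContinuousOn_of_isMonotoneOperator {L : NNReal} (hA : IsMonotoneOperator A)
    (hD : LipschitzOnWith L D (Icc a b)) {γ : ℝ → E}
    (hγ : IsIntegralCurveOn γ (fun t z ↦ D t z - A z) (Ico a b)) :
    UniformContinuousOn γ (Ico a b) := by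
  obtain ⟨K, hK₀, hK⟩ := exists_isOneSidedLipschitz_Icc hA hD.continuousOn
  replace hK : ∀ t ∈ Ico a b, IsOneSidedLipschitz K fun z ↦ D t z - A z :=
    fun t ht ↦ hK t (Ico_subset_Icc_self ht)
  obtain ⟨R, hR⟩ := exists_norm_le_of_isIntegralCurveOn_Ico (C := ‖A 0‖) hK₀ hK (by simp) hγ
  refine uniformContinuousOn_of_isIntegralCurveOn_Ico (C := L * R) hK₀ hK hγ fun s hs t ht ↦ ?_
  calc ‖D s (γ t) - A (γ t) - (D t (γ t) - A (γ t))‖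
      = ‖(D s - D t) (γ t)‖ := by rw [sub_sub_sub_cancel_right, sub_apply]
    _ ≤ ‖D s - D t‖ * ‖γ t‖ := (D s - D t).le_opNorm _
    _ ≤ L * |s - t| * R := by
        gcongr
        · exact hD.norm_sub_le (Ico_subset_Icc_self hs) (Ico_subset_Icc_self ht)
        · exact hR t ht
    _ = L * R * |s - t| := by ring

variable [CompleteSpace E]

lemma exists_isIntegralCurveOn_Icc_of_locallyLipschitz (hA : LocallyLipschitz A) (hab : a < b)
    (hD : ContinuousOn D (Icc a b)) (x : E) :
    ∃ T > a, ∃ γ : ℝ → E, γ a = x ∧ IsIntegralCurveOn γ (fun t z ↦ D t z - A z) (Icc a T) := by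
  obtain ⟨K, s, hs, hAK⟩ := hA x
  obtain ⟨r, hr, hrs⟩ := Metric.nhds_basis_closedBall.mem_iff.1 hs
  obtain ⟨M, hM⟩ := isCompact_Icc.exists_bound_of_continuousOn hD
  refine exists_isIntegralCurveOn_Icc_of_lipschitzOnWith (K := M.toNNReal + K) hab hr
    (fun z _ ↦ (hD.clm_apply continuousOn_const).sub continuousOn_const) fun t ht ↦ ?_
  have hDt : LipschitzWith M.toNNReal (D t) :=
    (D t).lipschitz.weaken (NNReal.le_toNNReal_of_coe_le (hM t ht))
  exact hDt.lipschitzOnWith.sub (hAK.mono hrs)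

theorem exists_isIntegralCurveOn_Ici_of_isMonotoneOperator (hA : IsMonotoneOperator A)
    (hA_lip : LocallyLipschitz A) (hD : LocallyLipschitzOn (Ici a) D) (x₀ : E) :
    ∃ γ : ℝ → E, γ a = x₀ ∧ IsIntegralCurveOn γ (fun t z ↦ D t z - A z) (Ici a) := by
  refine exists_isIntegralCurveOn_Ici ?_ (fun t ht x ↦ ?_) (fun T _ f g hf hg ↦ ?_)
    (fun b _ γ hγ ↦ ?_) x₀
  · exact ((hD.continuousOn.comp continuousOn_fst fun p hp ↦ hp.1).clm_apply continuousOn_snd).sub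
      (hA_lip.continuous.comp_continuousOn continuousOn_snd)
  · exact exists_isIntegralCurveOn_Icc_of_locallyLipschitz hA_lip (lt_add_one t)
      (hD.continuousOn.mono ((Icc_subset_Ici_iff (lt_add_one t).le).2 ht)) x
  · exact eqOn_Icc_of_isMonotoneOperator hA (hD.continuousOn.mono Icc_subset_Ici_self) hf hg
  · obtain ⟨L, hL⟩ := (hD.mono Icc_subset_Ici_self).exists_lipschitzOnWith_of_compact isCompact_Icc
    exact uniformContinuousOn_of_isMonotoneOperator hA hL hγ

end MonotonePerturbation

section Gradient

variable {E : Type*} [NormedAddCommGroup E] [InnerProductSpace ℝ E] [CompleteSpace E] {Φ : E → ℝ}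

lemma inner_gradient_le_sub_of_convexOn {s : Set E} {x y : E} (hconv : ConvexOn ℝ s Φ)
    (hx : x ∈ s) (hy : y ∈ s) (hΦ : DifferentiableAt ℝ Φ x) :
    ⟪gradient Φ x, y - x⟫ ≤ Φ y - Φ x := by
  have hline := hconv.comp_affineMap (AffineMap.lineMap x y)
  have hderiv : HasDerivAt (Φ ∘ AffineMap.lineMap x y) ⟪gradient Φ x, y - x⟫ (0 : ℝ) := by
    have hgrad : HasFDerivAt Φ (InnerProductSpace.toDual ℝ E (gradient Φ x))
        (AffineMap.lineMap x y (0 : ℝ)) := by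
      simpa using hΦ.hasGradientAt.hasFDerivAt
    exact hgrad.comp_hasDerivAt (0 : ℝ) AffineMap.hasDerivAt_lineMap
  simpa [slope_def_field] using
    hline.le_slope_of_hasDerivAt (by simpa using hx) (by simpa using hy) one_pos hderiv

lemma isMonotoneOperator_gradient (hconv : ConvexOn ℝ univ Φ) (hΦ : Differentiable ℝ Φ) :
    IsMonotoneOperator (gradient Φ) := by
  intro x y
  have hxy := inner_gradient_le_sub_of_convexOn hconv (mem_univ x) (mem_univ y) (hΦ x)
  have hyx := inner_gradient_le_sub_of_convexOn hconv (mem_univ y) (mem_univ x) (hΦ y)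
  rw [← neg_sub x y, inner_neg_right] at hxy
  rw [inner_sub_left]
  linarith

lemma contDiff_gradient_s17 {n : WithTop ℕ∞} (hΦ : ContDiff ℝ (n + 1) Φ) :
    ContDiff ℝ n (gradient Φ) :=
  (InnerProductSpace.toDual ℝ E).symm.toContinuousLinearEquiv.contDiff.comp
    (hΦ.fderiv_right le_rfl)

end Gradient

section HessianDamping

variable {E : Type*} [NormedAddCommGroup E] [InnerProductSpace ℝ E]
  {β t₀ : ℝ} {γ γ' : ℝ → ℝ} {G : E → E} {x x' x'' : ℝ → E} {s : Set ℝ}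

/-- `x` solves `x'' + γ(t) x' + β DG(x) x' + G(x) = 0` on `[t₀, ∞)`: the inertial dynamics driven by
an operator `G` with viscous damping `γ` and Hessian-driven damping `β`. The derivatives at `t₀` are
two-sided. -/
def IsHessianDampedSolution (γ : ℝ → ℝ) (β t₀ : ℝ) (G : E → E) (x x' x'' : ℝ → E) : Prop :=
  (∀ t ∈ Ici t₀, HasDerivAt x (x' t) t) ∧
  (∀ t ∈ Ici t₀, HasDerivAt x' (x'' t) t) ∧
  ContinuousOn x'' (Ici t₀) ∧
  ∀ t ∈ Ici t₀, x'' t + γ t • x' t + β • fderiv ℝ G (x t) (x' t) + G (x t) = 0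

/-- The phase-space variable, used with `v = x'` and `c = γ - β⁻¹`. Differentiating its second
component produces the Hessian term, so that `DG` no longer occurs in the resulting first-order
system. -/
def phaseState (β c : ℝ) (G : E → E) (x v : E) : WithLp 2 (E × E) :=
  WithLp.toLp 2 (x, v + β • G x + c • x)

/-- The operator `(x, y) ↦ (β G(x), 0)`, the nonlinear part of the first-order system. -/
def fstOperator (β : ℝ) (G : E → E) (z : WithLp 2 (E × E)) : WithLp 2 (E × E) :=
  WithLp.toLp 2 (β • G z.fst, 0)

variable (E) in
/-- The linear part `(x, y) ↦ (y - c x, (c' + β⁻¹ c) x - β⁻¹ y)` of the first-order system, where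
`c = γ - β⁻¹` and `c'` is its derivative. -/
noncomputable def phaseDrift (β c c' : ℝ) : WithLp 2 (E × E) →L[ℝ] WithLp 2 (E × E) :=
  (WithLp.prodContinuousLinearEquiv 2 ℝ E E).symm ∘L
    (.inl ℝ E E ∘L (WithLp.sndL 2 ℝ E E - c • WithLp.fstL 2 ℝ E E) +
      .inr ℝ E E ∘L ((c' + β⁻¹ * c) • WithLp.fstL 2 ℝ E E - β⁻¹ • WithLp.sndL 2 ℝ E E))

lemma phaseDrift_apply (β c c' : ℝ) (z : WithLp 2 (E × E)) :
    phaseDrift E β c c' z =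
      WithLp.toLp 2 (z.snd - c • z.fst, (c' + β⁻¹ * c) • z.fst - β⁻¹ • z.snd) := by
  apply WithLp.ofLp_injective
  ext <;> simp [phaseDrift]

lemma locallyLipschitzOn_phaseDrift (hs : Convex ℝ s) (hs' : UniqueDiffOn ℝ s)
    (hγ : ContDiffOn ℝ 2 γ s) :
    LocallyLipschitzOn s fun t ↦ phaseDrift E β (γ t - β⁻¹) (derivWithin γ s t) := by
  have hγ₁ : ContDiffOn ℝ 1 γ s := hγ.of_le one_le_two
  have hγ' : ContDiffOn ℝ 1 (derivWithin γ s) s := hγ.derivWithin hs' (by norm_num)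
  have hdrift : ContDiffOn ℝ 1 (fun t ↦ phaseDrift E β (γ t - β⁻¹) (derivWithin γ s t)) s := by
    unfold phaseDrift
    fun_prop
  exact hdrift.locallyLipschitzOn hs

lemma isMonotoneOperator_fstOperator (hβ : 0 ≤ β) (hG : IsMonotoneOperator G) :
    IsMonotoneOperator (fstOperator β G) := by
  intro z w
  simpa [fstOperator, ← smul_sub, inner_smul_left] using mul_nonneg hβ (hG z.fst w.fst)

lemma contDiff_fstOperator {n : WithTop ℕ∞} (hG : ContDiff ℝ n G) :
    ContDiff ℝ n (fstOperator β G) := by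
  have hcomp : ContDiff ℝ n fun z : WithLp 2 (E × E) ↦
      (β • G (WithLp.fstL 2 ℝ E E z), (0 : E)) := by
    fun_prop
  exact (WithLp.prodContinuousLinearEquiv 2 ℝ E E).symm.contDiff.comp hcomp

lemma phaseDrift_phaseState_sub_fstOperator (hβ : β ≠ 0) (c c' : ℝ) (p v : E) :
    phaseDrift E β c c' (phaseState β c G p v) - fstOperator β G (phaseState β c G p v) =
      WithLp.toLp 2 (v, c' • p - β⁻¹ • v - G p) := by
  apply WithLp.ofLp_injective
  ext
  · simp [phaseDrift_apply, phaseState, fstOperator]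
  · simp only [phaseDrift_apply, phaseState, fstOperator, WithLp.toLp_fst, WithLp.toLp_snd,
      WithLp.ofLp_sub, Prod.snd_sub, sub_zero, smul_add, inv_smul_smul₀ hβ]
    module

lemma bijective_phaseState (β c : ℝ) (G : E → E) :
    Function.Bijective fun p : E × E ↦ phaseState β c G p.1 p.2 := by
  refine Function.bijective_iff_has_inverse.2
    ⟨fun z ↦ (z.fst, z.snd - β • G z.fst - c • z.fst), fun p ↦ ?_, fun z ↦ ?_⟩
  · ext
    · rfl
    · simp only [phaseState, WithLp.toLp_fst, WithLp.toLp_snd]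
      abel
  · apply WithLp.ofLp_injective
    ext
    · rfl
    · simp only [phaseState]
      abel

lemma isIntegralCurveOn_phaseState_iff (hβ : β ≠ 0) (hG : Differentiable ℝ G)
    (hγ : ∀ t ∈ s, HasDerivWithinAt γ (γ' t) s t) :
    IsIntegralCurveOn (fun t ↦ phaseState β (γ t - β⁻¹) G (x t) (x' t))
      (fun t z ↦ phaseDrift E β (γ t - β⁻¹) (γ' t) z - fstOperator β G z) s ↔
    ∀ t ∈ s, HasDerivWithinAt x (x' t) s t ∧ HasDerivWithinAt x'
      (-(γ t • x' t + β • fderiv ℝ G (x t) (x' t) + G (x t))) s t := by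
  refine forall₂_congr fun t ht ↦ ?_
  simp only [phaseDrift_phaseState_sub_fstOperator hβ]
  have hGx : HasDerivWithinAt x (x' t) s t →
      HasDerivWithinAt (fun r ↦ β • G (x r) + (γ r - β⁻¹) • x r)
        (β • fderiv ℝ G (x t) (x' t) + ((γ t - β⁻¹) • x' t + γ' t • x t)) s t := fun hx ↦
    (((hG (x t)).hasFDerivAt.comp_hasDerivWithinAt t hx).const_smul β).add
      (((hγ t ht).sub_const β⁻¹).smul hx)
  constructor
  · intro hz
    have hx : HasDerivWithinAt x (x' t) s t :=
      (WithLp.fstL 2 ℝ E E).hasFDerivAt.comp_hasDerivWithinAt t hz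
    have hy := (WithLp.sndL 2 ℝ E E).hasFDerivAt.comp_hasDerivWithinAt t hz
    refine ⟨hx, ?_⟩
    convert! hy.sub (hGx hx) using 1
    · ext r
      simp [phaseState, add_assoc]
    · simp only [WithLp.sndL_apply, WithLp.toLp_snd]
      module
  · rintro ⟨hx, hx'⟩
    convert! (WithLp.prodContinuousLinearEquiv 2 ℝ E E).symm.hasFDerivAt.comp_hasDerivWithinAt t
      (hx.prodMk (hx'.add (hGx hx))) using 1
    · ext r
      simp [phaseState, add_assoc]
    · congr 2
      module

lemma IsHessianDampedSolution.isIntegralCurveOn_phaseState (hβ : β ≠ 0)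
    (hγ : DifferentiableOn ℝ γ (Ici t₀)) (hG : Differentiable ℝ G)
    (hx : IsHessianDampedSolution γ β t₀ G x x' x'') :
    IsIntegralCurveOn (fun t ↦ phaseState β (γ t - β⁻¹) G (x t) (x' t))
      (fun t z ↦ phaseDrift E β (γ t - β⁻¹) (derivWithin γ (Ici t₀) t) z - fstOperator β G z)
      (Ici t₀) := by
  obtain ⟨hderiv, hderiv', -, hode⟩ := hx
  refine (isIntegralCurveOn_phaseState_iff hβ hG fun t ht ↦ (hγ t ht).hasDerivWithinAt).2
    fun t ht ↦ ⟨(hderiv t ht).hasDerivWithinAt, ?_⟩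
  have hx'' : x'' t = -(γ t • x' t + β • fderiv ℝ G (x t) (x' t) + G (x t)) := by
    rw [eq_neg_iff_add_eq_zero, ← hode t ht]
    abel
  exact hx'' ▸ (hderiv' t ht).hasDerivWithinAt

lemma IsHessianDampedSolution.eqOn {z z' z'' : ℝ → E} (hβ : 0 < β)
    (hγ : ContDiffOn ℝ 2 γ (Ici t₀)) (hG : Differentiable ℝ G) (hmono : IsMonotoneOperator G)
    (hx : IsHessianDampedSolution γ β t₀ G x x' x'')
    (hz : IsHessianDampedSolution γ β t₀ G z z' z'') (h₀ : x t₀ = z t₀) (h₀' : x' t₀ = z' t₀) :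
    EqOn x z (Ici t₀) := by
  intro t ht
  have hγ₁ : DifferentiableOn ℝ γ (Ici t₀) := hγ.differentiableOn two_ne_zero
  have hdrift := locallyLipschitzOn_phaseDrift (E := E) (β := β) (convex_Ici t₀)
    (uniqueDiffOn_Ici t₀) hγ
  have hphase := eqOn_Icc_of_isMonotoneOperator (isMonotoneOperator_fstOperator hβ.le hmono)
    (hdrift.continuousOn.mono Icc_subset_Ici_self)
    ((hx.isIntegralCurveOn_phaseState hβ.ne' hγ₁ hG).mono Icc_subset_Ici_self)
    ((hz.isIntegralCurveOn_phaseState hβ.ne' hγ₁ hG).mono Icc_subset_Ici_self)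
    (by simp only [h₀, h₀']) (right_mem_Icc.2 ht)
  exact congrArg WithLp.fst hphase

lemma exists_isHessianDampedSolution_of_hasDerivWithinAt (hγ : ContinuousOn γ (Ici t₀))
    (hG : ContDiff ℝ 1 G)
    (hx : ∀ t ∈ Ici t₀, HasDerivWithinAt x (x' t) (Ici t₀) t ∧ HasDerivWithinAt x'
      (-(γ t • x' t + β • fderiv ℝ G (x t) (x' t) + G (x t))) (Ici t₀) t) :
    ∃ z z' z'' : ℝ → E,
      IsHessianDampedSolution γ β t₀ G z z' z'' ∧ z t₀ = x t₀ ∧ z' t₀ = x' t₀ := by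
  obtain ⟨z, hzx, hz⟩ := exists_eqOn_forall_hasDerivAt fun t ht ↦ (hx t ht).1
  obtain ⟨z', hzx', hz'⟩ := exists_eqOn_forall_hasDerivAt fun t ht ↦ (hx t ht).2
  have hz_cont : ContinuousOn z (Ici t₀) := fun t ht ↦ (hz t ht).continuousAt.continuousWithinAt
  have hz'_cont : ContinuousOn z' (Ici t₀) := fun t ht ↦ (hz' t ht).continuousAt.continuousWithinAt
  refine ⟨z, z', fun t ↦ -(γ t • z' t + β • fderiv ℝ G (z t) (z' t) + G (z t)),
    ⟨fun t ht ↦ hzx' ht ▸ hz t ht, fun t ht ↦ ?_, ?_, fun t _ ↦ by module⟩,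
    hzx self_mem_Ici, hzx' self_mem_Ici⟩
  · simpa only [hzx ht, hzx' ht] using hz' t ht
  · have hDG : ContinuousOn (fun t ↦ fderiv ℝ G (z t) (z' t)) (Ici t₀) :=
      ((hG.continuous_fderiv one_ne_zero).comp_continuousOn hz_cont).clm_apply hz'_cont
    exact (((hγ.smul hz'_cont).add (hDG.const_smul β)).add
      (hG.continuous.comp_continuousOn hz_cont)).neg

lemma exists_isHessianDampedSolution [CompleteSpace E] (hβ : 0 < β)
    (hγ : ContDiffOn ℝ 2 γ (Ici t₀)) (hG : ContDiff ℝ 1 G) (hmono : IsMonotoneOperator G)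
    (x₀ v₀ : E) :
    ∃ x x' x'' : ℝ → E, IsHessianDampedSolution γ β t₀ G x x' x'' ∧ x t₀ = x₀ ∧ x' t₀ = v₀ := by
  obtain ⟨z, hz₀, hz⟩ := exists_isIntegralCurveOn_Ici_of_isMonotoneOperator
    (isMonotoneOperator_fstOperator hβ.le hmono) (contDiff_fstOperator hG).locallyLipschitz
    (locallyLipschitzOn_phaseDrift (convex_Ici t₀) (uniqueDiffOn_Ici t₀) hγ)
    (phaseState β (γ t₀ - β⁻¹) G x₀ v₀)
  choose p hp using fun t ↦ (bijective_phaseState β (γ t - β⁻¹) G).surjective (z t)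
  obtain rfl : (fun t ↦ phaseState β (γ t - β⁻¹) G (p t).1 (p t).2) = z := funext hp
  have hp₀ : p t₀ = (x₀, v₀) := (bijective_phaseState β (γ t₀ - β⁻¹) G).injective hz₀
  have hγ₁ : DifferentiableOn ℝ γ (Ici t₀) := hγ.differentiableOn two_ne_zero
  obtain ⟨x, x', x'', hx, hx₀, hx₀'⟩ := exists_isHessianDampedSolution_of_hasDerivWithinAt
    hγ.continuousOn hG ((isIntegralCurveOn_phaseState_iff hβ.ne' (hG.differentiable one_ne_zero)
      fun t ht ↦ (hγ₁ t ht).hasDerivWithinAt).1 hz)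
  exact ⟨x, x', x'', hx, by rw [hx₀, hp₀], by rw [hx₀', hp₀]⟩

theorem stmt17_general [CompleteSpace E] (hβ : 0 < β) (hγ : ContDiffOn ℝ 2 γ (Ici t₀))
    (hG : ContDiff ℝ 1 G) (hmono : IsMonotoneOperator G) (x₀ v₀ : E) :
    ∃ x x' x'' : ℝ → E, IsHessianDampedSolution γ β t₀ G x x' x'' ∧ x t₀ = x₀ ∧ x' t₀ = v₀ ∧
      ∀ z z' z'' : ℝ → E, IsHessianDampedSolution γ β t₀ G z z' z'' → z t₀ = x₀ → z' t₀ = v₀ →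
        ∀ t ∈ Ici t₀, z t = x t := by
  obtain ⟨x, x', x'', hx, rfl, rfl⟩ := exists_isHessianDampedSolution hβ hγ hG hmono x₀ v₀
  exact ⟨x, x', x'', hx, rfl, rfl, fun z z' z'' hz hz₀ hz₀' ↦
    hz.eqOn hβ hγ (hG.differentiable one_ne_zero) hmono hx hz₀ hz₀'⟩

end HessianDamping

theorem stmt17 (α β t₀ : ℝ) (hα : 0 < α) (hβ : 0 < β) (ht₀ : 0 < t₀)
    (Φ : H → ℝ) (hconv : ConvexOn ℝ Set.univ Φ) (hΦ : ContDiff ℝ 2 Φ)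
    (x₀ v₀ : H) :
    ∃ x x' x'' : ℝ → H,
      IsDINAVDSolution α β t₀ Φ x x' x'' ∧ x t₀ = x₀ ∧ x' t₀ = v₀ ∧
      ∀ z z' z'' : ℝ → H,
        IsDINAVDSolution α β t₀ Φ z z' z'' → z t₀ = x₀ → z' t₀ = v₀ →
        ∀ t ∈ Set.Ici t₀, z t = x t :=
  stmt17_general hβ
    (contDiffOn_const.div contDiffOn_id fun _ ht ↦ (ht₀.trans_le ht).ne')
    (contDiff_gradient_s17 (by simpa only [one_add_one_eq_two] using hΦ))
    (isMonotoneOperator_gradient hconv (hΦ.differentiable two_ne_zero)) x₀ v₀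
end
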